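/- Let 𝔤 be a finite-dimensional semisimple Lie algebra over ℂ and let m be its rank, i.e. the dimension of a Cartan subalgebra of 𝔤. Then the center of the universal enveloping algebra U(𝔤) is isomorphic, as a ℂ-algebra, to the polynomial algebra ℂ[x₁,…,x_m] in m variables; in particular 𝔤 admits exactly m algebraically independent Casimir operators (central elements of U(𝔤)). -/

import Mathlib

/-!
# The center of the enveloping algebra of a semisimple Lie algebra

The center is compared, through its associated graded algebra, with the invariants of the symmetric
algebra `S(L)`, and these with the Weyl group invariants of `S(H)`, which form a polynomial algebra.
Only symmetric algebras occur, identified with polynomial rings by means of a basis, so the Killing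
form is not needed to pass to polynomial functions.

*From the center to `S(L)`.* Symmetrization sends homogeneous polynomials of degree `d` to elements
of filtration degree `d`; it is equivariant (`symz_adS`), multiplicative up to lower order terms
(`symz_mul`) and surjective up to lower order terms (`exists_symz`). A homogeneous polynomial whose
symmetrization has lower order vanishes (`eq_zero_of_symz_mem`): `U(L)` acts by differential
operators on polynomial functions of matrices, and when the center of `L` is trivial every linear
functional on `L` is the derivative at the identity of a function `f` vanishing there, so that the
symbol of an element of degree `d` can be read off its value on `f ^ d`. Consequently, if the invariants of `S(L)` are the
polynomial algebra on homogeneous invariants `f k`, then the symmetrizations of the `f k` generate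
the center freely (`center_equiv_of_invariants`).

*From `S(L)` to `S(H)`.* Choose a basis of `L` consisting of root vectors and a basis of `H`, and
consider an invariant `F` as a polynomial in the root vectors with coefficients in `S(H)`. The
restriction map takes the constant coefficient. In lowest order a root vector `e_{-δ}` acts as the
coroot of `-δ` times `∂/∂e_δ`, which gives injectivity (`res_inj`). The coefficient of
`(e_α e_{-α}) ^ (j + 1)`, times the coroot of `α`, is up to a scalar the derivative along `α` of the
coefficient of `(e_α e_{-α}) ^ j`; by descending induction on `j`, all these coefficients, the
restriction among them, are fixed by the reflection (`res_inv`).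
Conversely, a function fixed by the reflections extends to an invariant modulo terms of arbitrarily
high order (`res_surj`): the obstructions in each order satisfy Koszul relations, which are solvable
since non-proportional coroots are coprime, and for exponents supported on `α` and `-α` by the
invariance under the reflection. Taking a homogeneous component turns such an approximate invariant
into a true one.

*Invariants of the Weyl group.* Chevalley's theorem (`chevalley`): a minimal system of homogeneous
generators of the ideal of positive-degree invariants is algebraically independent, by the syzygy
lemma and Euler's identity, and generates the invariants by averaging. The number of generators
equals the number of variables.
-/

set_option linter.unusedSectionVars false
set_option linter.unusedSimpArgs false

/-! ### Reflections acting on polynomials -/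

namespace CenterUEA

open MvPolynomial

section RankOne

variable {κ : Type*}

/-- The constant-coefficient derivation `∑ aᵢ ∂/∂Xᵢ`. -/
noncomputable def dirD (a : κ → ℂ) : Derivation ℂ (MvPolynomial κ ℂ) (MvPolynomial κ ℂ) :=
  mkDerivation ℂ fun i => C (a i)

@[simp] lemma dirD_X (a : κ → ℂ) (i : κ) : dirD a (X i) = C (a i) := by
  simp [dirD, mkDerivation_X]

@[simp] lemma dirD_C (a : κ → ℂ) (r : ℂ) : dirD a (C r) = 0 := by
  simp [dirD]

variable [Fintype κ]

/-- The linear form `∑ vᵢ Xᵢ`. -/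
noncomputable def lin (v : κ → ℂ) : MvPolynomial κ ℂ := ∑ i, C (v i) * X i

/-- The substitution `Xᵢ ↦ Xᵢ - aᵢ • v`; it is the reflection attached to the pair `(a, v)`
when `⟨a, v⟩ = 2`. -/
noncomputable def refl (a v : κ → ℂ) : MvPolynomial κ ℂ →ₐ[ℂ] MvPolynomial κ ℂ :=
  aeval fun i => X i - C (a i) * lin v

/-- The substitution `Xᵢ ↦ Xᵢ - (aᵢ / 2) • v`; when `⟨a, v⟩ = 2` it is the projection along `v`,
whose kernel is the ideal generated by `v`. -/
noncomputable def proj (a v : κ → ℂ) : MvPolynomial κ ℂ →ₐ[ℂ] MvPolynomial κ ℂ :=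
  aeval fun i => X i - C (a i / 2) * lin v

@[simp] lemma refl_X (a v : κ → ℂ) (i : κ) : refl a v (X i) = X i - C (a i) * lin v := by
  simp [refl]

@[simp] lemma proj_X (a v : κ → ℂ) (i : κ) : proj a v (X i) = X i - C (a i / 2) * lin v := by
  simp [proj]

lemma lin_ne_zero {v : κ → ℂ} (hv : v ≠ 0) : lin v ≠ 0 := by
  classical
  contrapose! hv
  funext i
  have := congrArg (fun p => coeff (Finsupp.single i 1) p) hv
  simpa [lin, coeff_sum, coeff_C_mul, coeff_X, Finsupp.single_left_inj] using this

lemma lin_isHomogeneous (v : κ → ℂ) : (lin v).IsHomogeneous 1 := by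
  refine IsHomogeneous.sum _ _ _ fun i _ => ?_
  simpa using (isHomogeneous_C κ (v i)).mul (isHomogeneous_X ℂ i)

lemma refl_lin (a v w : κ → ℂ) : refl a v (lin w) = lin w - C (∑ i, a i * w i) * lin v := by
  have hw : lin w = ∑ i, C (w i) * X i := rfl
  have : refl a v (lin w) = ∑ i, C (w i) * (X i - C (a i) * lin v) := by
    simp [lin]
  rw [this, map_sum, Finset.sum_mul, hw, ← Finset.sum_sub_distrib]
  refine Finset.sum_congr rfl fun i _ => ?_
  rw [C_mul]
  ring

lemma proj_lin (a v w : κ → ℂ) : proj a v (lin w) = lin w - C ((∑ i, a i * w i) / 2) * lin v := by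
  have hw : lin w = ∑ i, C (w i) * X i := rfl
  have : proj a v (lin w) = ∑ i, C (w i) * (X i - C (a i / 2) * lin v) := by
    simp [lin]
  rw [this, Finset.sum_div, map_sum, Finset.sum_mul, hw, ← Finset.sum_sub_distrib]
  refine Finset.sum_congr rfl fun i _ => ?_
  rw [mul_div_right_comm, C_mul]
  ring

lemma dirD_lin (a w : κ → ℂ) : dirD a (lin w) = C (∑ i, a i * w i) := by
  simp [lin, Derivation.leibniz, mul_comm]

lemma lin_dvd_refl_sub (a v : κ → ℂ) (q : MvPolynomial κ ℂ) : lin v ∣ refl a v q - q := by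
  rw [← Ideal.mem_span_singleton, ← Ideal.Quotient.mk_eq_mk_iff_sub_mem]
  have : ((Ideal.Quotient.mkₐ ℂ (Ideal.span {lin v})).comp (refl a v)) =
      Ideal.Quotient.mkₐ ℂ (Ideal.span {lin v}) := by
    ext i
    simp only [AlgHom.comp_apply, refl_X, Ideal.Quotient.mkₐ_eq_mk]
    rw [Ideal.Quotient.mk_eq_mk_iff_sub_mem, Ideal.mem_span_singleton]
    exact ⟨-C (a i), by ring⟩
  exact DFunLike.congr_fun this q

lemma lin_dvd_proj_sub (a v : κ → ℂ) (q : MvPolynomial κ ℂ) : lin v ∣ proj a v q - q := by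
  rw [← Ideal.mem_span_singleton, ← Ideal.Quotient.mk_eq_mk_iff_sub_mem]
  have : ((Ideal.Quotient.mkₐ ℂ (Ideal.span {lin v})).comp (proj a v)) =
      Ideal.Quotient.mkₐ ℂ (Ideal.span {lin v}) := by
    ext i
    simp only [AlgHom.comp_apply, proj_X, Ideal.Quotient.mkₐ_eq_mk]
    rw [Ideal.Quotient.mk_eq_mk_iff_sub_mem, Ideal.mem_span_singleton]
    exact ⟨-C (a i / 2), by ring⟩
  exact DFunLike.congr_fun this q

variable {a v : κ → ℂ}

lemma lin_dvd_iff_proj (h : ∑ i, a i * v i = 2) (q : MvPolynomial κ ℂ) :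
    lin v ∣ q ↔ proj a v q = 0 := by
  constructor
  · rintro ⟨r, rfl⟩
    simp [proj_lin, h]
  · intro hq
    simpa [hq] using lin_dvd_proj_sub a v q

/-- Linear forms that are not proportional are coprime. -/
lemma lin_dvd_of_dvd_mul (h : ∑ i, a i * v i = 2) {w : κ → ℂ} (hw : ∀ t : ℂ, w ≠ t • v)
    {q : MvPolynomial κ ℂ} (hq : lin v ∣ lin w * q) : lin v ∣ q := by
  rw [lin_dvd_iff_proj h, map_mul, mul_eq_zero] at hq
  rw [lin_dvd_iff_proj h]
  refine hq.resolve_left ?_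
  rw [proj_lin]
  have : lin w - C ((∑ i, a i * w i) / 2) * lin v = lin (w - ((∑ i, a i * w i) / 2) • v) := by
    simp only [lin, Finset.mul_sum, ← Finset.sum_sub_distrib]
    refine Finset.sum_congr rfl fun i _ => ?_
    simp only [Pi.sub_apply, Pi.smul_apply, smul_eq_mul, C_sub, C_mul]
    ring
  rw [this]
  exact lin_ne_zero (sub_ne_zero.2 (hw _))

lemma refl_refl (h : ∑ i, a i * v i = 2) (q : MvPolynomial κ ℂ) :
    refl a v (refl a v q) = q := by
  have : (refl a v).comp (refl a v) = AlgHom.id ℂ _ := by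
    ext1 i
    simp only [AlgHom.comp_apply, refl_X, map_sub, map_mul, algHom_C, algebraMap_eq, refl_lin, h,
      AlgHom.id_apply]
    have : (C 2 : MvPolynomial κ ℂ) = 2 := map_ofNat C 2
    rw [this]; ring
  exact DFunLike.congr_fun this q

lemma refl_dirD (h : ∑ i, a i * v i = 2) (q : MvPolynomial κ ℂ) :
    refl a v (dirD a q) = - dirD a (refl a v q) := by
  induction q using MvPolynomial.induction_on with
  | C r => simp
  | add p q hp hq => simp only [map_add, hp, hq, neg_add]
  | mul_X p i hp =>
    have h2 : (C 2 : MvPolynomial κ ℂ) = 2 := map_ofNat C 2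
    simp only [Derivation.leibniz, map_mul, map_add, map_sub, smul_eq_mul, hp, refl_X, dirD_X,
      dirD_lin, h, dirD_C, algHom_C, algebraMap_eq, h2]
    ring

/-- If the derivative of `q` along `v` vanishes, then `q` is fixed by the reflection: the
polynomial `t ↦ q(X + a t)` has zero derivative, so its values at `0` and `-v` agree. -/
lemma refl_eq_of_dirD_eq_zero (q : MvPolynomial κ ℂ) (hq : dirD a q = 0) : refl a v q = q := by
  let T : MvPolynomial κ ℂ →ₐ[ℂ] Polynomial (MvPolynomial κ ℂ) :=
    aeval fun i => Polynomial.C (X i) + Polynomial.C (C (a i)) * Polynomial.X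
  have hT : ∀ p, Polynomial.derivative (T p) = T (dirD a p) := by
    intro p
    induction p using MvPolynomial.induction_on with
    | C r =>
      simp only [algHom_C, dirD_C, map_zero]
      rw [IsScalarTower.algebraMap_apply ℂ (MvPolynomial κ ℂ)]
      simp
    | add p q hp hq => simp only [map_add, hp, hq]
    | mul_X p i hp =>
      have h1 : T (X i) = Polynomial.C (X i) + Polynomial.C (C (a i)) * Polynomial.X := by
        simp [T]
      have h2 : T (C (a i)) = Polynomial.C (C (a i)) := by
        simp only [algHom_C]
        rw [IsScalarTower.algebraMap_apply ℂ (MvPolynomial κ ℂ)]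
        simp
      simp only [Derivation.leibniz, map_mul, map_add, smul_eq_mul, Polynomial.derivative_mul, hp,
        h1, dirD_X, h2, Polynomial.derivative_C, Polynomial.derivative_X]
      ring
  have h0 : Polynomial.derivative (T q) = 0 := by rw [hT, hq, map_zero]
  have hc := Polynomial.eq_C_of_derivative_eq_zero h0
  have e0 : ∀ p, Polynomial.eval 0 (T p) = p := by
    intro p
    have : ((Polynomial.aeval (0 : MvPolynomial κ ℂ)).restrictScalars ℂ).comp T
        = AlgHom.id ℂ _ := by
      ext1 i; simp [T]
    simpa [Polynomial.coe_aeval_eq_eval] using DFunLike.congr_fun this p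
  have e1 : ∀ p, Polynomial.eval (-lin v) (T p) = refl a v p := by
    intro p
    have : ((Polynomial.aeval (-lin v : MvPolynomial κ ℂ)).restrictScalars ℂ).comp T
        = refl a v := by
      ext1 i; simp [T, sub_eq_add_neg]
    simpa [Polynomial.coe_aeval_eq_eval] using DFunLike.congr_fun this p
  have e2 := e0 q
  rw [hc] at e2
  rw [← e1, hc]
  simpa using e2

lemma lin_dvd_of_refl_eq_neg {q : MvPolynomial κ ℂ} (hq : refl a v q = -q) : lin v ∣ q := by
  have h1 := lin_dvd_refl_sub a v q
  rw [hq] at h1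
  have : q = (-q - q) * C (-1/2) := by
    have h2 : (C (-1/2 : ℂ) : MvPolynomial κ ℂ) * 2 = -1 := by
      rw [show (2 : MvPolynomial κ ℂ) = C 2 from (map_ofNat C 2).symm, ← C_mul]; norm_num
    linear_combination q * h2
  rw [this]
  exact Dvd.dvd.mul_right h1 _

end RankOne

end CenterUEA

/-! ### The adjoint action near the Cartan subalgebra -/

namespace CenterUEA

open MvPolynomial

section Ord

/-- `F` vanishes to order `k` along the Cartan subalgebra: it only has monomials of degree at
least `k` in the root vectors. -/
def Ord {Φ R : Type*} [CommSemiring R] (k : ℕ) (F : MvPolynomial Φ R) : Prop :=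
  ∀ a : Φ →₀ ℕ, a.degree < k → coeff a F = 0

variable {Φ R : Type*} [CommRing R]

lemma Ord.mul_X {k : ℕ} {F : MvPolynomial Φ R} (hF : Ord k F) (γ : Φ) : Ord (k + 1) (F * X γ) := by
  classical
  intro a ha
  rw [coeff_mul_X']
  split_ifs with h
  · refine hF _ ?_
    have h1 : Finsupp.single γ 1 ≤ a := by
      rw [Finsupp.single_le_iff]; exact Nat.one_le_iff_ne_zero.2 (Finsupp.mem_support_iff.1 h)
    have h2 : (a - Finsupp.single γ 1).degree + 1 = a.degree := by
      conv_rhs => rw [← tsub_add_cancel_of_le h1]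
      simp
    omega
  · rfl

lemma Ord.mul_C {k : ℕ} {F : MvPolynomial Φ R} (hF : Ord k F) (r : R) : Ord k (F * C r) := by
  intro a ha
  rw [mul_comm, coeff_C_mul, hF a ha, mul_zero]

lemma Ord.sum {ι : Type*} {s : Finset ι} {k : ℕ} {F : ι → MvPolynomial Φ R}
    (hF : ∀ i ∈ s, Ord k (F i)) : Ord k (∑ i ∈ s, F i) := by
  intro a ha
  rw [coeff_sum]
  exact Finset.sum_eq_zero fun i hi => hF i hi a ha

lemma Ord.add {k : ℕ} {F G : MvPolynomial Φ R} (hF : Ord k F) (hG : Ord k G) : Ord k (F + G) := by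
  intro a ha
  rw [coeff_add, hF a ha, hG a ha, add_zero]

lemma Ord.mono {j k : ℕ} (h : j ≤ k) {F : MvPolynomial Φ R} (hF : Ord k F) : Ord j F :=
  fun a ha => hF a (ha.trans_le h)

lemma Ord.pderiv {k : ℕ} {F : MvPolynomial Φ R} (hF : Ord (k + 1) F) (γ : Φ) :
    Ord k (pderiv γ F) := by
  intro a ha
  rw [coeff_pderiv, hF, zero_mul]
  simpa using ha

end Ord

section Restriction

variable {κ Φ : Type*} [Fintype κ] [Fintype Φ] [DecidableEq Φ]

/-- The part of a reduced root system used below, in coordinates: `rt β` holds the values of the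
root `β` on a basis of the Cartan subalgebra, `hv β` the coordinates of its coroot. -/
structure RootDatum (κ Φ : Type*) [Fintype κ] where
  rt : Φ → κ → ℂ
  hv : Φ → κ → ℂ
  neg : Φ → Φ
  neg_neg : ∀ β, neg (neg β) = β
  rt_neg : ∀ β, rt (neg β) = -rt β
  hv_neg : ∀ β, hv (neg β) = -hv β
  rt_hv : ∀ β, ∑ i, rt β i * hv β i = 2
  indep : ∀ β γ, γ ≠ β → γ ≠ neg β → ∀ t : ℂ, hv γ ≠ t • hv β

/-- The adjoint action on the symmetric algebra, seen as the polynomial ring in the root vectors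
over the symmetric algebra of the Cartan subalgebra: `D β` is the action of a root vector and
`E i` that of a basis vector of the Cartan subalgebra. -/
structure RootAction (rd : RootDatum κ Φ) where
  D : Φ → Derivation ℂ (MvPolynomial Φ (MvPolynomial κ ℂ)) (MvPolynomial Φ (MvPolynomial κ ℂ))
  E : κ → Derivation ℂ (MvPolynomial Φ (MvPolynomial κ ℂ)) (MvPolynomial Φ (MvPolynomial κ ℂ))
  cst : Φ → ℂ
  cst_ne : ∀ β, cst β ≠ 0
  N : Φ → Φ → Φ → ℂ
  D_C : ∀ β r, D β (C r) = -(X β * C (dirD (rd.rt β) r))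
  D_X_neg : ∀ β, D β (X (rd.neg β)) = C (C (cst β) * lin (rd.hv β))
  D_X : ∀ β γ, γ ≠ rd.neg β → D β (X γ) = ∑ δ, C (C (N β γ δ)) * X δ
  N_self : ∀ β γ, γ ≠ rd.neg β → N β γ β = 0
  N_neg : ∀ β γ, γ ≠ rd.neg β → N β γ (rd.neg β) = 0
  E_C : ∀ i r, E i (C r) = 0
  E_X : ∀ i γ, E i (X γ) = C (C (rd.rt γ i)) * X γ
  E_D : ∀ i β F, E i (D β F) = D β (E i F) + rd.rt β i • D β F
  D_D : ∀ β γ, ∃ (a : Φ → ℂ) (b : κ → ℂ), ∀ F,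
    D β (D γ F) - D γ (D β F) = ∑ δ, a δ • D δ F + ∑ i, b i • E i F


variable {rd : RootDatum κ Φ} (A : RootAction rd)

namespace RootAction

/-- Coefficientwise description of the action of a root vector. -/
lemma coeff_D (β : Φ) (F : MvPolynomial Φ (MvPolynomial κ ℂ)) (t : Φ →₀ ℕ) :
    coeff t (A.D β F) =
      (if β ∈ t.support then -dirD (rd.rt β) (coeff (t - Finsupp.single β 1) F) else 0)
        + ∑ γ, coeff t (pderiv γ F * A.D β (X γ)) := by
  induction F using MvPolynomial.induction_on generalizing t with
  | C r =>
    simp only [A.D_C, pderiv_C, zero_mul, coeff_zero, Finset.sum_const_zero, add_zero, coeff_neg]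
    rw [mul_comm, coeff_mul_X']
    split_ifs with h
    · rw [coeff_C, coeff_C]
      split_ifs <;> simp
    · simp
  | add p q hp hq =>
    simp only [map_add, coeff_add, hp, hq, add_mul, Finset.sum_add_distrib]
    split_ifs <;> simp <;> ring
  | mul_X p δ hp =>
    rw [Derivation.leibniz, smul_eq_mul, smul_eq_mul, coeff_add, mul_comm (X δ), coeff_mul_X']
    have h1 : ∑ γ, coeff t (pderiv γ (p * X δ) * A.D β (X γ)) =
        coeff t (p * A.D β (X δ)) +
          if δ ∈ t.support then ∑ γ, coeff (t - Finsupp.single δ 1) (pderiv γ p * A.D β (X γ))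
          else 0 := by
      have : ∀ γ, coeff t (pderiv γ (p * X δ) * A.D β (X γ)) =
          (if γ = δ then coeff t (p * A.D β (X δ)) else 0) +
          if δ ∈ t.support then coeff (t - Finsupp.single δ 1) (pderiv γ p * A.D β (X γ))
          else 0 := by
        intro γ
        rw [← coeff_mul_X', Derivation.leibniz, pderiv_X, smul_eq_mul, smul_eq_mul]
        by_cases h : γ = δ
        · subst h
          simp [add_mul]; ring_nf
        · simp [h, Pi.single_apply, Ne.symm h]; ring_nf
      simp only [this, Finset.sum_add_distrib, Finset.sum_ite_eq', Finset.mem_univ, if_true]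
      split_ifs <;> simp
    rw [h1, coeff_mul_X']
    by_cases hδ : δ ∈ t.support
    · simp only [hδ, if_true, hp]
      by_cases e : β = δ
      · subst e
        simp only [hδ, if_true]
        split_ifs <;> (try simp only [map_zero]) <;> ring
      · have m1 : β ∈ (t - Finsupp.single δ 1).support ↔ β ∈ t.support := by
          simp [Finsupp.single_apply, Ne.symm e]
        have m2 : δ ∈ (t - Finsupp.single β 1).support ↔ δ ∈ t.support := by
          simp [Finsupp.single_apply, e]
        simp only [m1, m2, hδ, if_true, tsub_right_comm]
        ring
    · simp only [hδ, if_false, add_zero]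
      have : δ ∉ (t - Finsupp.single β 1).support := by
        simp only [Finsupp.mem_support_iff, not_not] at hδ ⊢
        simp [hδ]
      simp [this]

lemma D_X_ord (β γ : Φ) (h : γ ≠ rd.neg β) (F : MvPolynomial Φ (MvPolynomial κ ℂ)) {k : ℕ}
    (hF : Ord k F) : Ord (k + 1) (F * A.D β (X γ)) := by
  rw [A.D_X β γ h, Finset.mul_sum]
  refine Ord.sum fun δ _ => ?_
  rw [← mul_assoc]
  exact (hF.mul_C _).mul_X δ

/-- The lowest-order part of the action of a root vector. -/
lemma coeff_D_of_ord (β : Φ) {F : MvPolynomial Φ (MvPolynomial κ ℂ)} {t : Φ →₀ ℕ}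
    (hF : Ord (t.degree + 1) F) :
    coeff t (A.D β F) = coeff (t + Finsupp.single (rd.neg β) 1) F * ((t (rd.neg β) + 1 : ℕ) : MvPolynomial κ ℂ) *
      (C (A.cst β) * lin (rd.hv β)) := by
  rw [coeff_D, Finset.sum_eq_single (rd.neg β)]
  · rw [A.D_X_neg, mul_comm (pderiv _ _), coeff_C_mul, coeff_pderiv]
    split_ifs with h
    · rw [hF, map_zero]
      · simp [mul_comm]
      · have := Finsupp.degree_mono (tsub_le_self : t - Finsupp.single β 1 ≤ t)
        omega
    · simp [mul_comm]
  · intro γ _ h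
    exact A.D_X_ord β γ h _ (hF.pderiv γ) t (by omega)
  · simp

lemma ord_D (β : Φ) {F : MvPolynomial Φ (MvPolynomial κ ℂ)} {k : ℕ} (hF : Ord (k + 1) F) :
    Ord k (A.D β F) := by
  intro t ht
  rw [A.coeff_D_of_ord β (hF.mono (by omega)), hF]
  · simp
  · simpa using ht

lemma coeff_E (i : κ) (F : MvPolynomial Φ (MvPolynomial κ ℂ)) (t : Φ →₀ ℕ) :
    coeff t (A.E i F) = C (∑ γ, t γ * rd.rt γ i) * coeff t F := by
  induction F using MvPolynomial.induction_on generalizing t with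
  | C r =>
    rw [A.E_C, coeff_C]
    split_ifs with h
    · subst h; simp
    · simp
  | add p q hp hq => simp only [map_add, coeff_add, hp, hq]; ring
  | mul_X p δ hp =>
    rw [Derivation.leibniz, smul_eq_mul, smul_eq_mul, A.E_X, coeff_add, mul_comm (X δ),
      mul_left_comm, coeff_C_mul, coeff_mul_X', coeff_mul_X']
    split_ifs with h
    · rw [hp, ← add_mul, ← C_add]
      congr 2
      have : ∀ γ, (t γ : ℂ) * rd.rt γ i =
          (if γ = δ then rd.rt γ i else 0) + (((t - Finsupp.single δ 1 : Φ →₀ ℕ) γ : ℕ) : ℂ) * rd.rt γ i := by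
        intro γ
        by_cases e : γ = δ
        · subst e
          have : 1 ≤ t γ := Nat.one_le_iff_ne_zero.2 (Finsupp.mem_support_iff.1 h)
          simp only [if_true, Finsupp.tsub_apply, Finsupp.single_eq_same]
          push_cast [this]; ring
        · simp [e, Finsupp.single_apply, Ne.symm e]
      simp only [this, Finset.sum_add_distrib, Finset.sum_ite_eq', Finset.mem_univ, if_true]
    · simp

/-- In a combination of the monomials `(e_α e_{-α})^j`, the action of `e_α` is given by the
`𝔰𝔩₂`-recursion; no other monomial contributes. -/
lemma coeff_D_rankOne (α : Φ) (F : MvPolynomial Φ (MvPolynomial κ ℂ)) (j : ℕ) :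
    coeff (Finsupp.single α (j + 1) + Finsupp.single (rd.neg α) j) (A.D α F) =
      coeff (Finsupp.single α (j + 1) + Finsupp.single (rd.neg α) (j + 1)) F * ((j + 1 : ℕ) : MvPolynomial κ ℂ) *
        (C (A.cst α) * lin (rd.hv α)) -
      dirD (rd.rt α) (coeff (Finsupp.single α j + Finsupp.single (rd.neg α) j) F) := by
  have hne : rd.neg α ≠ α := by
    intro h
    have h1 := rd.rt_neg α
    have h2 := rd.rt_hv α
    rw [h] at h1
    have : rd.rt α = 0 := self_eq_neg.1 h1
    simp [this] at h2
  rw [coeff_D, Finset.sum_eq_single (rd.neg α)]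
  · rw [A.D_X_neg, mul_comm (pderiv _ _), coeff_C_mul, coeff_pderiv, if_pos]
    · rw [add_assoc, ← Finsupp.single_add]
      have : Finsupp.single α (j + 1) + Finsupp.single (rd.neg α) j - Finsupp.single α 1 =
          Finsupp.single α j + Finsupp.single (rd.neg α) j := by
        rw [Finsupp.single_add, add_right_comm, add_tsub_cancel_right]
      rw [this]
      simp [Finsupp.single_apply, hne.symm]
      ring
    · simp
  · intro γ _ h
    rw [A.D_X α γ h, Finset.mul_sum, coeff_sum]
    refine Finset.sum_eq_zero fun δ _ => ?_
    by_cases h1 : δ = α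
    · rw [h1, A.N_self α γ h]; simp
    by_cases h2 : δ = rd.neg α
    · rw [h2, A.N_neg α γ h]; simp
    rw [← mul_assoc, coeff_mul_X', if_neg]
    simp [Finsupp.single_apply, Ne.symm h1, Ne.symm h2]
  · simp

end RootAction

end Restriction

end CenterUEA

/-! ### Chevalley restriction: injectivity, invariance, and extension of invariants order by order -/

namespace CenterUEA

open MvPolynomial

section Restriction2

variable {κ Φ : Type*} [Fintype κ] [Fintype Φ] [DecidableEq Φ]

lemma RootDatum.hv_ne_zero (rd : RootDatum κ Φ) (β : Φ) : rd.hv β ≠ 0 := by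
  intro h
  have := rd.rt_hv β
  simp [h] at this

lemma RootDatum.neg_ne (rd : RootDatum κ Φ) (β : Φ) : rd.neg β ≠ β := by
  intro h
  have h1 := rd.rt_neg β
  have h2 := rd.rt_hv β
  rw [h] at h1
  have : rd.rt β = 0 := self_eq_neg.1 h1
  simp [this] at h2

variable {rd : RootDatum κ Φ} (A : RootAction rd)

namespace RootAction

/-- The coefficient by which `D (neg δ)` lowers the exponent of the root vector `δ`. -/
noncomputable def hh (δ : Φ) : MvPolynomial κ ℂ := C (A.cst (rd.neg δ)) * lin (rd.hv (rd.neg δ))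

lemma hh_ne (δ : Φ) : A.hh δ ≠ 0 :=
  mul_ne_zero (by simpa using A.cst_ne _) (lin_ne_zero (rd.hv_ne_zero _))

lemma refl_lin_self (α : Φ) : refl (rd.rt α) (rd.hv α) (lin (rd.hv α)) = -lin (rd.hv α) := by
  rw [refl_lin, rd.rt_hv]
  have : (C 2 : MvPolynomial κ ℂ) = 2 := map_ofNat C 2
  rw [this]; ring

/-- An invariant is determined by its restriction to the Cartan subalgebra. -/
theorem res_inj {F : MvPolynomial Φ (MvPolynomial κ ℂ)} (hD : ∀ β, A.D β F = 0)
    (h0 : coeff 0 F = 0) : F = 0 := by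
  have key : ∀ k, Ord (k + 1) F := by
    intro k
    induction k with
    | zero =>
      intro a ha
      have : a = 0 := by rw [← Finsupp.degree_eq_zero_iff]; omega
      rw [this, h0]
    | succ k ih =>
      intro a ha
      by_cases hk : a.degree < k + 1
      · exact ih a hk
      have hdeg : a.degree = k + 1 := by omega
      have hne : a ≠ 0 := by rintro rfl; simp at hdeg
      obtain ⟨δ, hδ⟩ := Finsupp.support_nonempty_iff.2 hne
      have h1 : Finsupp.single δ 1 ≤ a := by
        rw [Finsupp.single_le_iff]; exact Nat.one_le_iff_ne_zero.2 (Finsupp.mem_support_iff.1 hδ)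
      obtain ⟨t, rfl⟩ := exists_add_of_le h1
      have ht : t.degree = k := by simp at hdeg; omega
      have h2 := A.coeff_D_of_ord (rd.neg δ) (F := F) (t := t) (by rw [ht]; exact ih)
      rw [hD, coeff_zero, rd.neg_neg, eq_comm, mul_eq_zero, mul_eq_zero] at h2
      rcases h2 with (h2 | h2) | h2
      · rw [add_comm]; exact h2
      · exact absurd h2 (Nat.cast_ne_zero.2 (by omega))
      · exact absurd h2 (A.hh_ne δ)
  ext a : 1
  rw [coeff_zero]
  exact key a.degree a (Nat.lt_succ_self _)

/-- The restriction of an invariant to the Cartan subalgebra is fixed by the reflections. -/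
theorem res_inv {F : MvPolynomial Φ (MvPolynomial κ ℂ)} (hD : ∀ β, A.D β F = 0) (α : Φ) :
    refl (rd.rt α) (rd.hv α) (coeff 0 F) = coeff 0 F := by
  set c : ℕ → MvPolynomial κ ℂ :=
    fun j => coeff (Finsupp.single α j + Finsupp.single (rd.neg α) j) F with hc
  have step : ∀ j, refl (rd.rt α) (rd.hv α) (c (j + 1)) = c (j + 1) →
      refl (rd.rt α) (rd.hv α) (c j) = c j := by
    intro j hj
    have h1 := A.coeff_D_rankOne α F j
    rw [hD, coeff_zero, eq_comm, sub_eq_zero] at h1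
    change c (j + 1) * _ * _ = dirD _ (c j) at h1
    have h2 : refl (rd.rt α) (rd.hv α) (dirD (rd.rt α) (c j)) = -dirD (rd.rt α) (c j) := by
      rw [← h1]
      simp only [map_mul, hj, map_natCast, algHom_C, algebraMap_eq, refl_lin_self]
      ring
    rw [refl_dirD (rd.rt_hv α), neg_inj] at h2
    have h3 := refl_eq_of_dirD_eq_zero (a := rd.rt α) (v := rd.hv α)
      (refl (rd.rt α) (rd.hv α) (c j) - c j) (by rw [map_sub, h2, sub_self])
    rw [map_sub, refl_refl (rd.rt_hv α)] at h3
    exact sub_eq_zero.1 (self_eq_neg.1 (by rw [neg_sub]; exact h3.symm))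
  -- the coefficients `c j` vanish for large `j`, whence a descending induction
  have big : ∀ n j, F.totalDegree < j + n → refl (rd.rt α) (rd.hv α) (c j) = c j := by
    intro n
    induction n with
    | zero =>
      intro j hj
      have : c j = 0 := by
        refine coeff_eq_zero_of_totalDegree_lt ?_
        change _ < (Finsupp.single α j + Finsupp.single (rd.neg α) j).degree
        simp; omega
      rw [this, map_zero]
    | succ n ih => exact fun j hj => step j (ih (j + 1) (by omega))
  have := big (F.totalDegree + 1) 0 (by omega)
  simpa [hc] using this

section Step

variable {F : MvPolynomial Φ (MvPolynomial κ ℂ)} {k : ℕ}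

/-- Only monomials of weight zero matter. -/
lemma step_weight (hE : ∀ i, A.E i F = 0) {t : Φ →₀ ℕ} {δ : Φ} (i : κ)
    (hw : ∑ γ, ((t + Finsupp.single δ 1 : Φ →₀ ℕ) γ : ℂ) * rd.rt γ i ≠ 0) :
    coeff t (A.D (rd.neg δ) F) = 0 := by
  have h1 := congrArg (coeff t) (A.E_D i (rd.neg δ) F)
  rw [hE, map_zero, zero_add, A.coeff_E, rd.rt_neg, coeff_smul] at h1
  have h2 : ∑ γ, ((t + Finsupp.single δ 1 : Φ →₀ ℕ) γ : ℂ) * rd.rt γ i =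
      ∑ γ, (t γ : ℂ) * rd.rt γ i + rd.rt δ i := by
    simp only [Finsupp.add_apply, Nat.cast_add, add_mul, Finset.sum_add_distrib, add_right_inj]
    rw [Finset.sum_eq_single δ]
    · simp
    · intro γ _ h; simp [Finsupp.single_apply, h.symm]
    · simp
  rw [h2] at hw
  have h3 : C (∑ γ, (t γ : ℂ) * rd.rt γ i + rd.rt δ i) * coeff t (A.D (rd.neg δ) F) = 0 := by
    rw [C_add, add_mul, h1, ← smul_eq_C_mul (a := rd.rt δ i), Pi.neg_apply]
    module
  exact (mul_eq_zero.1 h3).resolve_left (mt C_eq_zero.1 hw)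

/-- The obstructions to extending the solution by one degree satisfy the Koszul relations. -/
lemma step_koszul (hE : ∀ i, A.E i F = 0) (hD : ∀ β, Ord k (A.D β F))
    {t : Φ →₀ ℕ} (ht : t.degree + 1 = k) (δ δ' : Φ) :
    coeff (t + Finsupp.single δ' 1) (A.D (rd.neg δ) F) * ((t δ' + 1 : ℕ) : MvPolynomial κ ℂ) *
        A.hh δ' =
      coeff (t + Finsupp.single δ 1) (A.D (rd.neg δ') F) * ((t δ + 1 : ℕ) : MvPolynomial κ ℂ) *
        A.hh δ := by
  obtain ⟨a, b, hab⟩ := A.D_D (rd.neg δ') (rd.neg δ)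
  have h1 := congrArg (coeff t) (hab F)
  rw [coeff_sub, coeff_add, coeff_sum, coeff_sum, Finset.sum_eq_zero, Finset.sum_eq_zero,
    A.coeff_D_of_ord (rd.neg δ') (F := A.D (rd.neg δ) F) (ht ▸ hD _),
    A.coeff_D_of_ord (rd.neg δ) (F := A.D (rd.neg δ') F) (ht ▸ hD _), add_zero, sub_eq_zero,
    rd.neg_neg, rd.neg_neg] at h1
  · exact h1
  · intro i _; rw [hE]; simp
  · intro δ _; rw [coeff_smul, hD _ t (by omega), smul_zero]

/-- The equations for the new coefficient at the exponent `b` are solvable as soon as one of them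
is. -/
lemma step_of_dvd (hE : ∀ i, A.E i F = 0) (hD : ∀ β, Ord k (A.D β F))
    {b : Φ →₀ ℕ} (hb : b.degree = k + 1) {δ₀ : Φ} (h0 : b δ₀ ≠ 0)
    (hdvd : A.hh δ₀ ∣ coeff (b - Finsupp.single δ₀ 1) (A.D (rd.neg δ₀) F)) :
    ∃ c, ∀ δ, b δ ≠ 0 → coeff (b - Finsupp.single δ 1) (A.D (rd.neg δ) F) +
      c * (b δ : MvPolynomial κ ℂ) * A.hh δ = 0 := by
  obtain ⟨q, hq⟩ := hdvd
  have hb0 : (C (1 / (b δ₀ : ℂ)) : MvPolynomial κ ℂ) * (b δ₀ : MvPolynomial κ ℂ) = 1 := by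
    rw [← map_natCast C, ← C_mul, one_div_mul_cancel (Nat.cast_ne_zero.2 h0), C_1]
  refine ⟨-(C (1 / (b δ₀ : ℂ)) * q), fun δ hδ => ?_⟩
  by_cases e : δ = δ₀
  · subst e
    rw [hq]
    linear_combination (-q * A.hh δ) * hb0
  have h1 : Finsupp.single δ 1 + Finsupp.single δ₀ 1 ≤ b := by
    intro γ
    by_cases e1 : γ = δ
    · subst e1; simp [Finsupp.single_apply, Ne.symm e]; omega
    by_cases e2 : γ = δ₀
    · subst e2; simp [Finsupp.single_apply, e]; omega
    · simp [Finsupp.single_apply, Ne.symm e1, Ne.symm e2]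
  obtain ⟨t, rfl⟩ := exists_add_of_le h1
  have ht : t.degree + 1 = k := by simp at hb; omega
  have h2 := A.step_koszul hE hD ht δ δ₀
  have e1 : Finsupp.single δ 1 + Finsupp.single δ₀ 1 + t - Finsupp.single δ 1 =
      t + Finsupp.single δ₀ 1 := by
    rw [add_assoc, add_tsub_cancel_left, add_comm]
  have e2 : Finsupp.single δ 1 + Finsupp.single δ₀ 1 + t - Finsupp.single δ₀ 1 =
      t + Finsupp.single δ 1 := by
    rw [add_assoc, add_left_comm, add_tsub_cancel_left, add_comm]
  have e3 : (Finsupp.single δ 1 + Finsupp.single δ₀ 1 + t : Φ →₀ ℕ) δ = t δ + 1 := by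
    simp [Finsupp.single_apply, Ne.symm e, add_comm]
  have e4 : (Finsupp.single δ 1 + Finsupp.single δ₀ 1 + t : Φ →₀ ℕ) δ₀ = t δ₀ + 1 := by
    simp [Finsupp.single_apply, e, add_comm]
  rw [e4] at hb0 h0
  rw [e2] at hq
  rw [e1, e3, e4]
  rw [hq] at h2
  have h3 : ((t δ₀ + 1 : ℕ) : MvPolynomial κ ℂ) * A.hh δ₀ ≠ 0 :=
    mul_ne_zero (Nat.cast_ne_zero.2 h0) (A.hh_ne _)
  refine (mul_eq_zero.1 ?_).resolve_left h3
  linear_combination h2 - (q * ((t δ + 1 : ℕ) : MvPolynomial κ ℂ) * A.hh δ * A.hh δ₀) * hb0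

/-- Solvability at exponents involving two non-proportional roots. -/
lemma step_indep (hE : ∀ i, A.E i F = 0) (hD : ∀ β, Ord k (A.D β F))
    {b : Φ →₀ ℕ} (hb : b.degree = k + 1) {δ₀ γ₀ : Φ} (h0 : b δ₀ ≠ 0) (h1 : b γ₀ ≠ 0)
    (hne : γ₀ ≠ δ₀) (hne' : γ₀ ≠ rd.neg δ₀) :
    A.hh δ₀ ∣ coeff (b - Finsupp.single δ₀ 1) (A.D (rd.neg δ₀) F) := by
  have hle : Finsupp.single δ₀ 1 + Finsupp.single γ₀ 1 ≤ b := by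
    intro γ
    by_cases e1 : γ = δ₀
    · subst e1; simp [Finsupp.single_apply, hne]; omega
    by_cases e2 : γ = γ₀
    · subst e2; simp [Finsupp.single_apply, Ne.symm hne]; omega
    · simp [Finsupp.single_apply, Ne.symm e1, Ne.symm e2]
  obtain ⟨t, rfl⟩ := exists_add_of_le hle
  have ht : t.degree + 1 = k := by simp at hb; omega
  have h2 := A.step_koszul hE hD ht δ₀ γ₀
  have e1 : Finsupp.single δ₀ 1 + Finsupp.single γ₀ 1 + t - Finsupp.single δ₀ 1 =
      t + Finsupp.single γ₀ 1 := by
    rw [add_assoc, add_tsub_cancel_left, add_comm]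
  rw [e1]
  set g := coeff (t + Finsupp.single γ₀ 1) (A.D (rd.neg δ₀) F)
  have hu : ∀ (z : ℂ), z ≠ 0 → ∀ p q : MvPolynomial κ ℂ, p ∣ C z * q → p ∣ q := by
    intro z hz p q h
    have : q = C z⁻¹ * (C z * q) := by
      rw [← mul_assoc, ← C_mul, inv_mul_cancel₀ hz, C_1, one_mul]
    rw [this]
    exact h.mul_left _
  have h3 : lin (rd.hv (rd.neg δ₀)) ∣ g := by
    refine lin_dvd_of_dvd_mul (rd.rt_hv (rd.neg δ₀)) (w := rd.hv (rd.neg γ₀)) ?_ ?_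
    · refine rd.indep _ _ ?_ ?_
      · intro h; exact hne (by rw [← rd.neg_neg γ₀, h, rd.neg_neg])
      · intro h; rw [rd.neg_neg] at h; exact hne' (by rw [← h, rd.neg_neg])
    · refine hu _ (A.cst_ne (rd.neg γ₀)) _ _ (hu ((t γ₀ + 1 : ℕ) : ℂ)
        (Nat.cast_ne_zero.2 (Nat.succ_ne_zero _)) _ _ ?_)
      rw [map_natCast]
      have : ((t γ₀ + 1 : ℕ) : MvPolynomial κ ℂ) *
          (C (A.cst (rd.neg γ₀)) * (lin (rd.hv (rd.neg γ₀)) * g)) =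
          g * ((t γ₀ + 1 : ℕ) : MvPolynomial κ ℂ) * A.hh γ₀ := by rw [hh]; ring
      rw [this, h2, hh]
      exact ((dvd_refl _).mul_left _).mul_left _
  obtain ⟨q, hq⟩ := h3
  have h5 : (C (A.cst (rd.neg δ₀))⁻¹ : MvPolynomial κ ℂ) * C (A.cst (rd.neg δ₀)) = 1 := by
    rw [← C_mul, inv_mul_cancel₀ (A.cst_ne _), C_1]
  refine ⟨C (A.cst (rd.neg δ₀))⁻¹ * q, ?_⟩
  rw [hq, hh]
  linear_combination (- lin (rd.hv (rd.neg δ₀)) * q) * h5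

/-- Solvability at the exponents `(e_α e_{-α})^(j+1)`. -/
lemma step_rankOne (hD : ∀ β, Ord k (A.D β F))
    {j : ℕ} (hj : 2 * j + 1 = k) (α : Φ)
    (hf : refl (rd.rt α) (rd.hv α) (coeff 0 F) = coeff 0 F) :
    C (A.cst α) * lin (rd.hv α) ∣
      coeff (Finsupp.single α (j + 1) + Finsupp.single (rd.neg α) j) (A.D α F) := by
  have hI : ∀ i, i ≤ j → refl (rd.rt α) (rd.hv α)
      (coeff (Finsupp.single α i + Finsupp.single (rd.neg α) i) F) =
      coeff (Finsupp.single α i + Finsupp.single (rd.neg α) i) F := by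
    intro i
    induction i with
    | zero => intro _; simpa using hf
    | succ i ih =>
      intro hi
      have h1 := A.coeff_D_rankOne α F i
      rw [hD α _ (by simp; omega), eq_comm, sub_eq_zero] at h1
      have h2 := congrArg (refl (rd.rt α) (rd.hv α)) h1
      rw [refl_dirD (rd.rt_hv α), ih (by omega), ← h1] at h2
      simp only [map_mul, map_natCast, algHom_C, algebraMap_eq, refl_lin_self] at h2
      have h3 : ((i + 1 : ℕ) : MvPolynomial κ ℂ) * (C (A.cst α) * lin (rd.hv α)) ≠ 0 :=
        mul_ne_zero (Nat.cast_ne_zero.2 (by omega)) (mul_ne_zero (by simpa using A.cst_ne α)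
          (lin_ne_zero (rd.hv_ne_zero _)))
      refine mul_right_cancel₀ h3 ?_
      linear_combination -h2
  rw [A.coeff_D_rankOne]
  refine dvd_sub (dvd_mul_left _ _) ?_
  obtain ⟨q, hq⟩ := lin_dvd_of_refl_eq_neg (a := rd.rt α) (v := rd.hv α)
    (q := dirD (rd.rt α) (coeff (Finsupp.single α j + Finsupp.single (rd.neg α) j) F))
    (by rw [refl_dirD (rd.rt_hv α), hI j le_rfl])
  have h5 : (C (A.cst α)⁻¹ : MvPolynomial κ ℂ) * C (A.cst α) = 1 := by
    rw [← C_mul, inv_mul_cancel₀ (A.cst_ne _), C_1]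
  refine ⟨C (A.cst α)⁻¹ * q, ?_⟩
  rw [hq]
  linear_combination (- lin (rd.hv α) * q) * h5

/-- The equations for the new coefficient at an exponent of degree `k + 1` are solvable, by a
coefficient of weight zero. -/
lemma step_exists (hE : ∀ i, A.E i F = 0) (hD : ∀ β, Ord k (A.D β F))
    (hf : ∀ α, refl (rd.rt α) (rd.hv α) (coeff 0 F) = coeff 0 F)
    {b : Φ →₀ ℕ} (hb : b.degree = k + 1) :
    ∃ c, (∀ δ, b δ ≠ 0 → coeff (b - Finsupp.single δ 1) (A.D (rd.neg δ) F) +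
      c * (b δ : MvPolynomial κ ℂ) * A.hh δ = 0) ∧
      ∀ i, ∑ γ, (b γ : ℂ) * rd.rt γ i ≠ 0 → c = 0 := by
  by_cases hw : ∃ i, ∑ γ, (b γ : ℂ) * rd.rt γ i ≠ 0
  · obtain ⟨i, hi⟩ := hw
    refine ⟨0, fun δ hδ => ?_, fun _ _ => rfl⟩
    have h1 : Finsupp.single δ 1 ≤ b := by
      rw [Finsupp.single_le_iff]; omega
    rw [A.step_weight hE i, zero_mul, zero_mul, add_zero]
    rwa [tsub_add_cancel_of_le h1]
  push Not at hw
  suffices h : ∃ δ₀, b δ₀ ≠ 0 ∧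
      A.hh δ₀ ∣ coeff (b - Finsupp.single δ₀ 1) (A.D (rd.neg δ₀) F) by
    obtain ⟨δ₀, h0, hdvd⟩ := h
    obtain ⟨c, hc⟩ := A.step_of_dvd hE hD hb h0 hdvd
    exact ⟨c, hc, fun i hi => absurd (hw i) hi⟩
  have hne : b ≠ 0 := by rintro rfl; simp at hb
  obtain ⟨δ₀, hδ₀⟩ := Finsupp.support_nonempty_iff.2 hne
  rw [Finsupp.mem_support_iff] at hδ₀
  refine ⟨δ₀, hδ₀, ?_⟩
  by_cases hA : ∃ γ₀, b γ₀ ≠ 0 ∧ γ₀ ≠ δ₀ ∧ γ₀ ≠ rd.neg δ₀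
  · obtain ⟨γ₀, h1, h2, h3⟩ := hA
    exact A.step_indep hE hD hb hδ₀ h1 h2 h3
  push Not at hA
  have hnn := rd.neg_ne δ₀
  have hb2 : b = Finsupp.single (rd.neg δ₀) (b (rd.neg δ₀)) + Finsupp.single δ₀ (b δ₀) := by
    ext γ
    by_cases e1 : γ = δ₀
    · subst e1; simp [Finsupp.single_apply, hnn]
    by_cases e2 : γ = rd.neg δ₀
    · subst e2; simp [Finsupp.single_apply, hnn.symm]
    · simp only [Finsupp.add_apply, Finsupp.single_apply, Ne.symm e1, Ne.symm e2, if_false]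
      by_contra h
      exact e2 (hA γ h e1)
  have heq : b δ₀ = b (rd.neg δ₀) := by
    have h1 : ∀ i, ((b δ₀ : ℂ) - b (rd.neg δ₀)) * rd.rt δ₀ i = 0 := by
      intro i
      rw [← hw i]
      rw [← Finset.sum_subset (Finset.subset_univ {δ₀, rd.neg δ₀}), Finset.sum_pair hnn.symm,
        rd.rt_neg]
      · simp; ring
      · intro γ _ hγ
        simp only [Finset.mem_insert, Finset.mem_singleton, not_or] at hγ
        have : b γ = 0 := by
          by_contra h
          exact hγ.2 (hA γ h hγ.1)
        simp [this]
    have h2 : ∃ i, rd.rt δ₀ i ≠ 0 := by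
      by_contra h
      push Not at h
      have := rd.rt_hv δ₀
      simp [h] at this
    obtain ⟨i, hi⟩ := h2
    have := (mul_eq_zero.1 (h1 i)).resolve_right hi
    exact_mod_cast sub_eq_zero.1 this
  obtain ⟨j, hj⟩ := Nat.exists_eq_succ_of_ne_zero hδ₀
  rw [← heq, hj] at hb2
  have hjk : 2 * j + 1 = k := by
    rw [hb2] at hb; simp at hb; omega
  have := A.step_rankOne hD hjk (rd.neg δ₀) (hf _)
  rw [rd.neg_neg] at this
  rw [hb2]
  have e : Finsupp.single (rd.neg δ₀) j.succ + Finsupp.single δ₀ j.succ - Finsupp.single δ₀ 1 =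
      Finsupp.single (rd.neg δ₀) (j + 1) + Finsupp.single δ₀ j := by
    rw [Nat.succ_eq_add_one, Finsupp.single_add δ₀, ← add_assoc, add_tsub_cancel_right]
  rw [e]
  exact this

end Step

/-- Every function on the Cartan subalgebra fixed by the reflections extends to an element which
is invariant up to arbitrarily high order. -/
theorem res_surj {f : MvPolynomial κ ℂ} (hf : ∀ α, refl (rd.rt α) (rd.hv α) f = f) (k : ℕ) :
    ∃ F, coeff 0 F = f ∧ (∀ i, A.E i F = 0) ∧ ∀ β, Ord k (A.D β F) := by
  induction k with
  | zero => exact ⟨C f, by simp, fun i => A.E_C i f, fun β a ha => absurd ha (Nat.not_lt_zero _)⟩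
  | succ k ih =>
    obtain ⟨F, h0, hE, hD⟩ := ih
    have hex := fun b (hb : b.degree = k + 1) =>
      A.step_exists hE hD (by rw [h0]; exact hf) (b := b) hb
    choose! c hc1 hc2 using hex
    set S : Finset (Φ →₀ ℕ) := Finset.univ.finsuppAntidiag (k + 1) with hS
    have memS : ∀ b, b ∈ S ↔ b.degree = k + 1 := by
      intro b
      rw [hS, Finset.mem_finsuppAntidiag, Finsupp.degree_eq_sum]
      simp
    set G : MvPolynomial Φ (MvPolynomial κ ℂ) := ∑ b ∈ S, monomial b (c b) with hG
    have cG : ∀ t, coeff t G = if t.degree = k + 1 then c t else 0 := by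
      intro t
      rw [hG, coeff_sum]
      simp only [coeff_monomial, Finset.sum_ite_eq', memS]
    have oG : Ord (k + 1) G := by
      intro t ht
      rw [cG, if_neg (by omega)]
    refine ⟨F + G, ?_, ?_, ?_⟩
    · rw [coeff_add, h0, oG 0 (by simp), add_zero]
    · intro i
      rw [map_add, hE, zero_add]
      ext t : 1
      rw [A.coeff_E, cG, coeff_zero]
      split_ifs with h
      · by_cases hw : ∑ γ, (t γ : ℂ) * rd.rt γ i = 0
        · rw [hw, C_0, zero_mul]
        · rw [hc2 t h i hw, mul_zero]
      · rw [mul_zero]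
    · intro β t ht
      rw [map_add, coeff_add]
      by_cases hk : t.degree < k
      · rw [hD β t hk, A.ord_D β oG t hk, add_zero]
      have htk : t.degree = k := by omega
      rw [A.coeff_D_of_ord β (F := G) (by rw [htk]; exact oG), cG, if_pos (by simp [htk])]
      have := hc1 (t + Finsupp.single (rd.neg β) 1) (by simp [htk]) (rd.neg β) (by simp)
      rw [add_tsub_cancel_right, rd.neg_neg, hh, rd.neg_neg] at this
      simpa using this

end RootAction

end Restriction2

end CenterUEA

/-! ### Invariants of finite reflection groups: the syzygy lemma -/

namespace CenterUEA

open MvPolynomial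

section Graded

variable {κ : Type*}

lemma homogeneousComponent_mul_of_isHomogeneous {f : MvPolynomial κ ℂ} {d : ℕ}
    (hf : f.IsHomogeneous d) (a : MvPolynomial κ ℂ) (n : ℕ) :
    homogeneousComponent n (a * f) = if d ≤ n then homogeneousComponent (n - d) a * f else 0 := by
  have h1 : a * f = ∑ i ∈ Finset.range (a.totalDegree + 1), homogeneousComponent i a * f := by
    rw [← Finset.sum_mul, sum_homogeneousComponent]
  have h2 : ∀ i, homogeneousComponent n (homogeneousComponent i a * f) =
      if i + d = n then homogeneousComponent i a * f else 0 := by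
    intro i
    rw [homogeneousComponent_of_mem ((homogeneousComponent_isHomogeneous i a).mul hf)]
    simp only [eq_comm]
  rw [h1, map_sum]
  simp only [h2]
  split_ifs with h
  · have h3 : ∀ i, i + d = n ↔ i = n - d := by intro i; omega
    simp only [h3, Finset.sum_ite_eq', Finset.mem_range]
    split_ifs with h4
    · rfl
    · rw [homogeneousComponent_eq_zero _ _ (by omega), zero_mul]
  · exact Finset.sum_eq_zero fun i _ => if_neg (by omega)

attribute [local instance] MvPolynomial.gradedAlgebra in
lemma homogeneousComponent_mem_span {s : Set (MvPolynomial κ ℂ)}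
    (hs : ∀ x ∈ s, ∃ n, x.IsHomogeneous n) {p : MvPolynomial κ ℂ} (hp : p ∈ Ideal.span s) (n : ℕ) :
    homogeneousComponent n p ∈ Ideal.span s :=
  homogeneousComponent_mem_of_mem (Ideal.homogeneous_span _ s hs) hp n

/-- A graded version of Nakayama's lemma. -/
lemma mem_span_of_mul_mem {s : Set (MvPolynomial κ ℂ)}
    (hs : ∀ x ∈ s, ∃ n, x.IsHomogeneous n) {f b : MvPolynomial κ ℂ} {d : ℕ}
    (hf : f.IsHomogeneous d) (hb : coeff 0 b ≠ 0) (h : b * f ∈ Ideal.span s) :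
    f ∈ Ideal.span s := by
  have h1 := homogeneousComponent_mem_span hs h d
  rw [homogeneousComponent_mul_of_isHomogeneous hf, if_pos le_rfl, Nat.sub_self,
    homogeneousComponent_zero] at h1
  have : f = C (coeff 0 b)⁻¹ * (C (coeff 0 b) * f) := by
    rw [← mul_assoc, ← C_mul, inv_mul_cancel₀ hb, C_1, one_mul]
  rw [this]
  exact Ideal.mul_mem_left _ _ h1

end Graded

section Invariants

variable {κ : Type*} (G : Subgroup (MvPolynomial κ ℂ ≃ₐ[ℂ] MvPolynomial κ ℂ))

/-- The algebra of invariants. -/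
def invs : Subalgebra ℂ (MvPolynomial κ ℂ) where
  carrier := {p | ∀ g ∈ G, g p = p}
  mul_mem' hp hq g hg := by rw [map_mul, hp g hg, hq g hg]
  add_mem' hp hq g hg := by rw [map_add, hp g hg, hq g hg]
  algebraMap_mem' r g _ := g.commutes r

lemma mem_invs {p : MvPolynomial κ ℂ} : p ∈ invs G ↔ ∀ g ∈ G, g p = p := Iff.rfl

/-- The homogeneous invariants of positive degree. -/
def posInvs : Set (MvPolynomial κ ℂ) := {p | p ∈ invs G ∧ ∃ n, 0 < n ∧ p.IsHomogeneous n}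

/-- The group acts by graded automorphisms. -/
def GradedAction : Prop :=
  ∀ g ∈ G, ∀ n (p : MvPolynomial κ ℂ), p.IsHomogeneous n → (g p).IsHomogeneous n

/-- The group is generated by elements which are the identity modulo a linear form. -/
def ReflGen : Prop :=
  ∃ S : Set (MvPolynomial κ ℂ ≃ₐ[ℂ] MvPolynomial κ ℂ), G = Subgroup.closure S ∧
    ∀ s ∈ S, ∃ l : MvPolynomial κ ℂ, l ≠ 0 ∧ l.IsHomogeneous 1 ∧ ∀ p, l ∣ s p - p

variable {G}

lemma GradedAction.comp (hG : GradedAction G) {g : MvPolynomial κ ℂ ≃ₐ[ℂ] MvPolynomial κ ℂ}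
    (hg : g ∈ G) (n : ℕ) (p : MvPolynomial κ ℂ) :
    g (homogeneousComponent n p) = homogeneousComponent n (g p) := by
  conv_rhs => rw [← sum_homogeneousComponent p, map_sum, map_sum]
  simp_rw [homogeneousComponent_of_mem (hG g hg _ _ (homogeneousComponent_isHomogeneous _ p))]
  simp only [Finset.sum_ite_eq, Finset.mem_range]
  split_ifs with h
  · rfl
  · rw [homogeneousComponent_eq_zero _ _ (by omega), map_zero]

lemma GradedAction.comp_mem (hG : GradedAction G) {p : MvPolynomial κ ℂ} (hp : p ∈ invs G)
    (n : ℕ) : homogeneousComponent n p ∈ invs G := by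
  intro g hg
  rw [hG.comp hg, hp g hg]

lemma GradedAction.totalDegree_le (hG : GradedAction G)
    {g : MvPolynomial κ ℂ ≃ₐ[ℂ] MvPolynomial κ ℂ} (hg : g ∈ G) (p : MvPolynomial κ ℂ) :
    (g p).totalDegree ≤ p.totalDegree := by
  conv_lhs => rw [← sum_homogeneousComponent p, map_sum]
  refine totalDegree_finsetSum_le fun i hi => ?_
  have := (hG g hg _ _ (homogeneousComponent_isHomogeneous i p)).totalDegree_le
  simp only [Finset.mem_range] at hi
  omega

lemma coeff_zero_of_mem_span {p : MvPolynomial κ ℂ} (hp : p ∈ Ideal.span (posInvs G)) :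
    coeff 0 p = 0 := by
  have : Ideal.span (posInvs G) ≤ RingHom.ker (constantCoeff (R := ℂ) (σ := κ)) := by
    rw [Ideal.span_le]
    rintro f ⟨-, n, hn, hf⟩
    exact hf.coeff_eq_zero (by simpa using hn.ne)
  exact this hp

lemma mem_span_of_inv (hG : GradedAction G) {p : MvPolynomial κ ℂ} (hp : p ∈ invs G)
    (h0 : coeff 0 p = 0) : p ∈ Ideal.span (posInvs G) := by
  rw [← sum_homogeneousComponent p]
  refine Ideal.sum_mem _ fun i _ => ?_
  rcases Nat.eq_zero_or_pos i with rfl | hi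
  · rw [homogeneousComponent_zero, h0, C_0]
    exact Ideal.zero_mem _
  · exact Ideal.subset_span ⟨hG.comp_mem hp i, i, hi, homogeneousComponent_isHomogeneous i p⟩

lemma map_mem_span {g : MvPolynomial κ ℂ ≃ₐ[ℂ] MvPolynomial κ ℂ} (hg : g ∈ G)
    {p : MvPolynomial κ ℂ} (hp : p ∈ Ideal.span (posInvs G)) :
    g p ∈ Ideal.span (posInvs G) := by
  have : Ideal.span (posInvs G) ≤ (Ideal.span (posInvs G)).comap (g : _ →+* _) := by
    rw [Ideal.span_le]
    intro f hf
    simp only [SetLike.mem_coe, Ideal.mem_comap]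
    change g f ∈ _
    rw [hf.1 g hg]
    exact Ideal.subset_span hf
  exact this hp

lemma sub_mem_span {S : Set (MvPolynomial κ ℂ ≃ₐ[ℂ] MvPolynomial κ ℂ)}
    (hS : G = Subgroup.closure S) {p : MvPolynomial κ ℂ}
    (h : ∀ s ∈ S, s p - p ∈ Ideal.span (posInvs G)) :
    ∀ g ∈ G, g p - p ∈ Ideal.span (posInvs G) := by
  intro g hg
  have hg' := hg
  rw [hS] at hg'
  induction hg' using Subgroup.closure_induction with
  | mem x hx => exact h x hx
  | one => simp
  | mul x y hx hy h1 h2 =>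
    rw [← hS] at hx hy
    have : (x * y) p - p = x (y p - p) + (x p - p) := by simp
    rw [this]
    exact Ideal.add_mem _ (map_mem_span hx (h2 hy)) (h1 hx)
  | inv x hx h1 =>
    rw [← hS] at hx
    have : x⁻¹ p - p = - x⁻¹ (x p - p) := by
      rw [map_sub, neg_sub, ← AlgEquiv.mul_apply, inv_mul_cancel, AlgEquiv.one_apply]
    rw [this]
    exact Ideal.neg_mem_iff _ |>.2 (map_mem_span (inv_mem hx) (h1 hx))

variable [Fintype G]

/-- Averaging over the group. -/
noncomputable def avg : MvPolynomial κ ℂ →ₗ[ℂ] MvPolynomial κ ℂ :=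
  (Fintype.card G : ℂ)⁻¹ • ∑ g : G, (g : MvPolynomial κ ℂ ≃ₐ[ℂ] MvPolynomial κ ℂ).toLinearMap

lemma avg_apply (p : MvPolynomial κ ℂ) :
    avg (G := G) p = (Fintype.card G : ℂ)⁻¹ •
      ∑ g : G, (g : MvPolynomial κ ℂ ≃ₐ[ℂ] MvPolynomial κ ℂ) p := by
  simp [avg]

lemma avg_mem (p : MvPolynomial κ ℂ) : avg (G := G) p ∈ invs G := by
  intro g hg
  rw [avg_apply, map_smul, map_sum]
  congr 1
  exact Fintype.sum_equiv (Equiv.mulLeft (⟨g, hg⟩ : G)) _ _ fun x => by simp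

lemma avg_mul {f : MvPolynomial κ ℂ} (hf : f ∈ invs G) (a : MvPolynomial κ ℂ) :
    avg (G := G) (a * f) = avg (G := G) a * f := by
  rw [avg_apply, avg_apply, smul_mul_assoc, Finset.sum_mul]
  congr 1
  refine Finset.sum_congr rfl fun g _ => ?_
  rw [map_mul, hf g g.2]

lemma avg_self {f : MvPolynomial κ ℂ} (hf : f ∈ invs G) : avg (G := G) f = f := by
  have h1 : avg (G := G) (1 : MvPolynomial κ ℂ) = 1 := by
    rw [avg_apply]
    simp only [map_one, Finset.sum_const, Finset.card_univ]
    rw [← Nat.cast_smul_eq_nsmul ℂ, smul_smul, inv_mul_cancel₀, one_smul]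
    exact Nat.cast_ne_zero.2 Fintype.card_ne_zero
  have := avg_mul hf 1
  rwa [one_mul, h1, one_mul] at this

lemma avg_sub_mem {p : MvPolynomial κ ℂ}
    (h : ∀ g ∈ G, g p - p ∈ Ideal.span (posInvs G)) :
    avg (G := G) p - p ∈ Ideal.span (posInvs G) := by
  have : avg (G := G) p - p = (Fintype.card G : ℂ)⁻¹ •
      ∑ g : G, ((g : MvPolynomial κ ℂ ≃ₐ[ℂ] MvPolynomial κ ℂ) p - p) := by
    rw [avg_apply, Finset.sum_sub_distrib, smul_sub, Finset.sum_const, Finset.card_univ,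
      ← Nat.cast_smul_eq_nsmul ℂ, smul_smul, inv_mul_cancel₀, one_smul]
    exact Nat.cast_ne_zero.2 Fintype.card_ne_zero
  rw [this, smul_eq_C_mul]
  exact Ideal.mul_mem_left _ _ (Ideal.sum_mem _ fun g _ => h g g.2)

/-- The syzygy lemma for invariants of a reflection group: if `∑ gᵢ hᵢ = 0` with homogeneous
invariants `hᵢ` and `hⱼ` is not in the ideal generated by the others, then `gⱼ` lies in the ideal
generated by the invariants of positive degree. -/
lemma syzygy (hG : GradedAction G) (hR : ReflGen G) {ι : Type*} [DecidableEq ι] (T : Finset ι)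
    (h : ι → MvPolynomial κ ℂ) (hh : ∀ i, ∃ n, (h i).IsHomogeneous n) (hi : ∀ i, h i ∈ invs G)
    {j : ι} (hj : j ∈ T) (hn : h j ∉ Ideal.span (h '' (T.erase j))) (g : ι → MvPolynomial κ ℂ)
    (hg : ∑ i ∈ T, g i * h i = 0) : g j ∈ Ideal.span (posInvs G) := by
  obtain ⟨S, hS, hSl⟩ := hR
  suffices H : ∀ n (g : ι → MvPolynomial κ ℂ), (g j).totalDegree ≤ n → ∑ i ∈ T, g i * h i = 0 →
      g j ∈ Ideal.span (posInvs G) from H _ g le_rfl hg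
  clear hg g
  have h0 : ∀ g : ι → MvPolynomial κ ℂ, ∑ i ∈ T, g i * h i = 0 → coeff 0 (g j) = 0 := by
    intro g hg
    by_contra hc
    obtain ⟨d, hd⟩ := hh j
    refine hn (mem_span_of_mul_mem (b := g j) ?_ hd hc ?_)
    · rintro _ ⟨i, -, rfl⟩; exact hh i
    · rw [← Finset.add_sum_erase _ _ hj] at hg
      rw [eq_neg_of_add_eq_zero_left hg]
      refine (Ideal.neg_mem_iff _).2 (Ideal.sum_mem _ fun i hi => Ideal.mul_mem_left _ _ ?_)
      exact Ideal.subset_span ⟨i, hi, rfl⟩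
  intro n
  induction n with
  | zero =>
    intro g hd hg
    have h1 := h0 g hg
    rw [totalDegree_eq_zero_iff_eq_C.1 (Nat.le_zero.1 hd), h1, C_0]
    exact Ideal.zero_mem _
  | succ n ih =>
    intro g hd hg
    -- dividing `s g - g` by the linear form of `s` gives a relation of smaller degree
    have hs : ∀ s ∈ S, s (g j) - g j ∈ Ideal.span (posInvs G) := by
      intro s hs
      have hsG : s ∈ G := by rw [hS]; exact Subgroup.subset_closure hs
      obtain ⟨l, hl0, hl1, hl⟩ := hSl s hs
      choose q hq using fun i => hl (g i)
      have h2 : ∑ i ∈ T, q i * h i = 0 := by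
        have h3 : l * ∑ i ∈ T, q i * h i = s (∑ i ∈ T, g i * h i) - ∑ i ∈ T, g i * h i := by
          rw [map_sum, Finset.mul_sum, ← Finset.sum_sub_distrib]
          refine Finset.sum_congr rfl fun i _ => ?_
          rw [map_mul, hi i s hsG, ← sub_mul, hq, mul_assoc]
        rw [hg, map_zero, sub_zero] at h3
        exact (mul_eq_zero.1 h3).resolve_left hl0
      rw [hq]
      refine Ideal.mul_mem_left _ _ ?_
      by_cases hq0 : q j = 0
      · rw [hq0]; exact Ideal.zero_mem _
      refine ih q ?_ h2
      have h4 := totalDegree_mul_of_isDomain hl0 hq0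
      rw [← hq, hl1.totalDegree hl0] at h4
      have h5 := totalDegree_sub (s (g j)) (g j)
      have h6 := hG.totalDegree_le hsG (g j)
      have h7 : max (s (g j)).totalDegree (g j).totalDegree ≤ n + 1 :=
        max_le (h6.trans hd) hd
      omega
    -- hence `g j` agrees with its average modulo the ideal, and the average is an invariant
    -- without constant term
    have h1 := avg_sub_mem (sub_mem_span hS hs)
    have h2 : avg (G := G) (g j) ∈ Ideal.span (posInvs G) := by
      refine mem_span_of_inv hG (avg_mem _) ?_
      have := coeff_zero_of_mem_span h1
      rwa [coeff_sub, h0 g hg, sub_zero] at this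
    have := Ideal.sub_mem _ h2 h1
    rwa [sub_sub_cancel] at this

end Invariants

end CenterUEA

/-! ### Chevalley's theorem on invariants of finite reflection groups -/

namespace CenterUEA

open MvPolynomial

section Chevalley

variable {κ ι : Type*}

/-- The chain rule. -/
lemma derivation_aeval [Fintype ι] (D : Derivation ℂ (MvPolynomial κ ℂ) (MvPolynomial κ ℂ))
    (f : ι → MvPolynomial κ ℂ) (h : MvPolynomial ι ℂ) :
    D (aeval f h) = ∑ i, aeval f (pderiv i h) * D (f i) := by
  classical
  induction h using MvPolynomial.induction_on with
  | C r => simp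
  | add p q hp hq => simp only [map_add, hp, hq, add_mul, Finset.sum_add_distrib]
  | mul_X p j hp =>
    simp only [map_mul, aeval_X, Derivation.leibniz, hp, smul_eq_mul, map_add, add_mul,
      Finset.sum_add_distrib]
    congr 1
    · rw [Finset.sum_eq_single j]
      · simp
      · intro i _ hij; simp [pderiv_X_of_ne hij.symm]
      · simp
    · rw [Finset.mul_sum]
      exact Finset.sum_congr rfl fun i _ => by ring

lemma isHomogeneous_aeval [Fintype ι] {f : ι → MvPolynomial κ ℂ} {d : ι → ℕ}
    (hf : ∀ i, (f i).IsHomogeneous (d i)) {h : MvPolynomial ι ℂ} {n : ℕ}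
    (hh : h.IsWeightedHomogeneous d n) : (aeval f h).IsHomogeneous n := by
  rw [aeval_def, eval₂_eq']
  refine IsHomogeneous.sum _ _ _ fun m hm => ?_
  have h1 := hh (mem_support_iff.1 hm)
  rw [← zero_add n, ← h1]
  refine (isHomogeneous_C _ _).mul ?_
  rw [Finsupp.weight_apply, Finsupp.sum_fintype _ _ (by simp)]
  refine IsHomogeneous.prod _ _ _ fun i _ => ?_
  rw [smul_eq_mul, mul_comm]
  exact (hf i).pow _

lemma homogeneousComponent_aeval [Fintype ι] {f : ι → MvPolynomial κ ℂ} {d : ι → ℕ}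
    (hf : ∀ i, (f i).IsHomogeneous (d i)) (h : MvPolynomial ι ℂ) (n : ℕ) :
    homogeneousComponent n (aeval f h) = aeval f (weightedHomogeneousComponent d n h) := by
  have h1 : h = ∑ m ∈ Finset.range (weightedTotalDegree d h + n + 1),
      weightedHomogeneousComponent d m h := by
    conv_lhs => rw [← sum_weightedHomogeneousComponent d h]
    rw [finsum_eq_sum_of_support_subset]
    intro m hm
    simp only [Function.mem_support] at hm
    simp only [Finset.coe_range, Set.mem_Iio]
    by_contra hc
    exact hm (weightedHomogeneousComponent_eq_zero _ _ (by omega))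
  conv_lhs => rw [h1, map_sum, map_sum]
  rw [Finset.sum_eq_single n]
  · exact homogeneousComponent_eq_self (isHomogeneous_aeval hf
      (weightedHomogeneousComponent_isWeightedHomogeneous _ _))
  · intro m _ hm
    rw [homogeneousComponent_of_mem (isHomogeneous_aeval hf
      (weightedHomogeneousComponent_isWeightedHomogeneous _ _)), if_neg hm.symm]
  · intro hn; exact absurd (Finset.mem_range.2 (by omega)) hn

lemma eq_C_of_pderiv_eq_zero {h : MvPolynomial ι ℂ} (hh : ∀ i, pderiv i h = 0) :
    h = C (coeff 0 h) := by
  classical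
  ext t
  rw [coeff_C]
  split_ifs with h0
  · rw [h0]
  · obtain ⟨i, hi⟩ := Finsupp.support_nonempty_iff.2 (Ne.symm h0)
    have h1 : Finsupp.single i 1 ≤ t := by
      rw [Finsupp.single_le_iff]; exact Nat.one_le_iff_ne_zero.2 (Finsupp.mem_support_iff.1 hi)
    obtain ⟨s, rfl⟩ := exists_add_of_le h1
    have h2 := congrArg (coeff s) (hh i)
    rw [coeff_pderiv, coeff_zero, mul_eq_zero, add_comm] at h2
    refine h2.resolve_right ?_
    exact_mod_cast Nat.succ_ne_zero (s i)

/-- A relation of least weight has only trivial derivatives or non-trivial ones which are not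
relations. -/
lemma exists_minimal_relation [Fintype ι] {f : ι → MvPolynomial κ ℂ} {d : ι → ℕ}
    (hd : ∀ i, 0 < d i) (hf : ∀ i, (f i).IsHomogeneous (d i))
    (hrel : ¬ AlgebraicIndependent ℂ f) :
    ∃ h : MvPolynomial ι ℂ, aeval f h = 0 ∧ (∀ i, ∃ n, (aeval f (pderiv i h)).IsHomogeneous n) ∧
      ∃ i, aeval f (pderiv i h) ≠ 0 := by
  classical
  have hex : ∃ n, ∃ h : MvPolynomial ι ℂ, h.IsWeightedHomogeneous d n ∧ aeval f h = 0 ∧ h ≠ 0 := by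
    rw [algebraicIndependent_iff] at hrel
    push Not at hrel
    obtain ⟨h, h0, hne⟩ := hrel
    by_contra hc
    push Not at hc
    refine hne ?_
    rw [← sum_weightedHomogeneousComponent d h]
    refine finsum_eq_zero_of_forall_eq_zero fun n => ?_
    refine hc n _ (weightedHomogeneousComponent_isWeightedHomogeneous _ _) ?_
    rw [← homogeneousComponent_aeval hf, h0, map_zero]
  obtain ⟨h, hw, h0, hne⟩ := Nat.find_spec hex
  have hmin := fun m => Nat.find_min hex (m := m)
  set n := Nat.find hex
  have hder : ∀ i, (n < d i ∧ pderiv i h = 0) ∨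
      (d i ≤ n ∧ (pderiv i h).IsWeightedHomogeneous d (n - d i)) := by
    intro i
    rcases lt_or_ge n (d i) with hlt | hle
    · refine Or.inl ⟨hlt, ?_⟩
      refine pderiv_eq_zero_of_notMem_vars fun hi => ?_
      obtain ⟨m, hm, him⟩ := (mem_vars_iff_mem_support i).1 hi
      have h1 := hw (mem_support_iff.1 hm)
      have h2 := Finsupp.le_weight_of_ne_zero' d (Finsupp.mem_support_iff.1 him)
      omega
    · exact Or.inr ⟨hle, hw.pderiv (Nat.sub_add_cancel hle)⟩
  refine ⟨h, h0, fun i => ?_, ?_⟩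
  · rcases hder i with ⟨-, h1⟩ | ⟨-, h1⟩
    · exact ⟨0, by rw [h1, map_zero]; exact isHomogeneous_zero _ _ _⟩
    · exact ⟨_, isHomogeneous_aeval hf h1⟩
  · by_contra hc
    push Not at hc
    have h1 : ∀ i, pderiv i h = 0 := by
      intro i
      rcases hder i with ⟨-, h1⟩ | ⟨hle, h1⟩
      · exact h1
      · by_contra hne'
        exact hmin (n - d i) (by have := hd i; omega) ⟨_, h1, hc i, hne'⟩
    rw [eq_C_of_pderiv_eq_zero h1, algHom_C] at h0
    have h2 : coeff 0 h = 0 := by simpa using h0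
    rw [eq_C_of_pderiv_eq_zero h1, h2, C_0] at hne
    exact hne rfl

variable {G : Subgroup (MvPolynomial κ ℂ ≃ₐ[ℂ] MvPolynomial κ ℂ)} [Fintype G] [Fintype κ]

/-- A minimal system of homogeneous generators of the ideal of positive-degree invariants is
algebraically independent. -/
lemma algebraicIndependent_of_minimal [Fintype ι] (hG : GradedAction G) (hR : ReflGen G)
    {f : ι → MvPolynomial κ ℂ} {d : ι → ℕ} (hd : ∀ i, 0 < d i)
    (hf : ∀ i, (f i).IsHomogeneous (d i)) (hfi : ∀ i, f i ∈ invs G)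
    (hspan : Ideal.span (Set.range f) = Ideal.span (posInvs G))
    (hmin : ∀ j, f j ∉ Ideal.span (f '' {i | i ≠ j})) : AlgebraicIndependent ℂ f := by
  classical
  by_contra hrel
  obtain ⟨h, h0, hhom, i₀, hi₀⟩ := exists_minimal_relation hd hf hrel
  set u : ι → MvPolynomial κ ℂ := fun i => aeval f (pderiv i h) with hu
  have hui : ∀ i, u i ∈ invs G := by
    intro i
    have : (invs G).toSubmodule ≥ (Algebra.adjoin ℂ (Set.range f)).toSubmodule := by
      change Algebra.adjoin ℂ (Set.range f) ≤ invs G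
      rw [Algebra.adjoin_le_iff]
      rintro _ ⟨i, rfl⟩
      exact hfi i
    refine this ?_
    rw [Subalgebra.mem_toSubmodule, Algebra.adjoin_range_eq_range_aeval]
    exact ⟨_, rfl⟩
  -- a minimal set of generators of the ideal spanned by the derivatives
  obtain ⟨T, hT, hTmin⟩ : ∃ T : Finset ι, (∀ i, u i ∈ Ideal.span (u '' T)) ∧
      ∀ j ∈ T, u j ∉ Ideal.span (u '' (T.erase j)) := by
    have hex : ∃ n, ∃ T : Finset ι, T.card = n ∧ ∀ i, u i ∈ Ideal.span (u '' T) :=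
      ⟨_, Finset.univ, rfl, fun i => Ideal.subset_span ⟨i, by simp, rfl⟩⟩
    obtain ⟨T, hTc, hT⟩ := Nat.find_spec hex
    refine ⟨T, hT, fun j hj hmem => ?_⟩
    refine Nat.find_min hex (m := (T.erase j).card) ?_ ⟨_, rfl, fun i => ?_⟩
    · rw [← hTc]; exact Finset.card_erase_lt_of_mem hj
    · have hle : Ideal.span (u '' T) ≤ Ideal.span (u '' (T.erase j)) := by
        rw [Ideal.span_le]
        rintro _ ⟨k, hk, rfl⟩
        by_cases hkj : k = j
        · rw [hkj]; exact hmem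
        · exact Ideal.subset_span ⟨k, by simpa [hkj] using hk, rfl⟩
      exact hle (hT i)
  obtain ⟨j, hj⟩ : T.Nonempty := by
    rw [Finset.nonempty_iff_ne_empty]
    rintro rfl
    have := hT i₀
    simp only [Finset.coe_empty, Set.image_empty, Ideal.span_empty, Ideal.mem_bot] at this
    exact hi₀ this
  have hcomb : ∀ i, ∃ c : ι → MvPolynomial κ ℂ, u i = ∑ k ∈ T, c k * u k ∧
      (i ∈ T → ∀ k, c k = if k = i then 1 else 0) := by
    intro i
    by_cases hi : i ∈ T
    · exact ⟨fun k => if k = i then 1 else 0, by simp [hi], fun _ _ => rfl⟩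
    · have := hT i
      rw [Ideal.span, Submodule.mem_span_image_finset_iff_exists_fun'] at this
      obtain ⟨c, hc⟩ := this
      exact ⟨c, by rw [← hc]; rfl, fun h => absurd h hi⟩
  choose c hc hcT using hcomb
  -- differentiate the relation and apply the syzygy lemma
  have hv : ∀ k, ∑ i, c i j * pderiv k (f i) ∈ Ideal.span (posInvs G) := by
    intro k
    refine syzygy hG hR T u hhom hui hj (hTmin j hj) (fun l => ∑ i, c i l * pderiv k (f i)) ?_
    have h1 := derivation_aeval (pderiv k) f h
    rw [h0, map_zero] at h1
    rw [h1]
    simp only [Finset.sum_mul]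
    rw [Finset.sum_comm]
    refine Finset.sum_congr rfl fun i _ => ?_
    change _ = u i * _
    rw [hc i, Finset.sum_mul]
    exact Finset.sum_congr rfl fun l _ => by ring
  have hcomb2 : ∀ k, ∃ a : ι → MvPolynomial κ ℂ,
      ∑ i, c i j * pderiv k (f i) = ∑ i, a i * f i := by
    intro k
    have := hv k
    rw [← hspan, Ideal.mem_span_range_iff_exists_fun] at this
    obtain ⟨a, ha⟩ := this
    exact ⟨a, ha.symm⟩
  choose a ha using hcomb2
  -- Euler's identity
  have hE : ∑ i, c i j * (C (d i : ℂ) * f i) = ∑ i, (∑ k, X k * a k i) * f i := by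
    have h1 : ∑ k, X k * ∑ i, c i j * pderiv k (f i) = ∑ k, X k * ∑ i, a k i * f i :=
      Finset.sum_congr rfl fun k _ => by rw [ha]
    simp only [Finset.mul_sum] at h1
    rw [Finset.sum_comm, Finset.sum_comm (f := fun k i => X k * (a k i * f i))] at h1
    have h2 : ∀ i, C (d i : ℂ) * f i = ∑ k, X k * pderiv k (f i) := by
      intro i
      rw [(hf i).sum_X_mul_pderiv, map_natCast, nsmul_eq_mul]
    simp only [h2, Finset.mul_sum, Finset.sum_mul]
    convert h1 using 1
    · exact Finset.sum_congr rfl fun i _ => Finset.sum_congr rfl fun k _ => by ring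
    · exact Finset.sum_congr rfl fun i _ => Finset.sum_congr rfl fun k _ => by ring
  refine hmin j (mem_span_of_mul_mem (b := C (d j : ℂ) - ∑ k, X k * a k j) ?_ (hf j) ?_ ?_)
  · rintro _ ⟨i, -, rfl⟩; exact ⟨_, hf i⟩
  · have : coeff 0 (∑ k, X k * a k j) = 0 := by
      rw [coeff_sum]
      refine Finset.sum_eq_zero fun k _ => ?_
      change constantCoeff _ = 0
      simp
    rw [coeff_sub, this, sub_zero, coeff_zero_C]
    exact Nat.cast_ne_zero.2 (hd j).ne'
  · have h3 : (C (d j : ℂ) - ∑ k, X k * a k j) * f j =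
        ∑ i ∈ Finset.univ.erase j, ((∑ k, X k * a k i) - c i j * C (d i : ℂ)) * f i := by
      rw [← Finset.add_sum_erase _ _ (Finset.mem_univ j),
        ← Finset.add_sum_erase _ (fun i => (∑ k, X k * a k i) * f i) (Finset.mem_univ j),
        hcT j hj, if_pos rfl] at hE
      simp only [sub_mul, Finset.sum_sub_distrib]
      have h4 : ∑ i ∈ Finset.univ.erase j, c i j * C (d i : ℂ) * f i =
          ∑ i ∈ Finset.univ.erase j, c i j * (C (d i : ℂ) * f i) :=
        Finset.sum_congr rfl fun i _ => mul_assoc _ _ _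
      rw [h4]
      linear_combination hE
    rw [h3]
    refine Ideal.sum_mem _ fun i hi => Ideal.mul_mem_left _ _ (Ideal.subset_span ⟨i, ?_, rfl⟩)
    simpa using hi

/-- Homogeneous generators of the ideal of positive-degree invariants generate the algebra of
invariants. -/
lemma invs_le_adjoin [Fintype ι] (hG : GradedAction G)
    {f : ι → MvPolynomial κ ℂ} {d : ι → ℕ} (hd : ∀ i, 0 < d i)
    (hf : ∀ i, (f i).IsHomogeneous (d i)) (hfi : ∀ i, f i ∈ invs G)
    (hspan : Ideal.span (Set.range f) = Ideal.span (posInvs G)) :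
    invs G ≤ Algebra.adjoin ℂ (Set.range f) := by
  have H : ∀ n p, p ∈ invs G → p.IsHomogeneous n → p ∈ Algebra.adjoin ℂ (Set.range f) := by
    intro n
    induction n using Nat.strong_induction_on with
    | _ n ih =>
      intro p hp hpn
      rcases Nat.eq_zero_or_pos n with rfl | hn
      · rw [← homogeneousComponent_eq_self hpn, homogeneousComponent_zero]
        exact Subalgebra.algebraMap_mem _ _
      · have h1 : p ∈ Ideal.span (Set.range f) := by
          rw [hspan]; exact Ideal.subset_span ⟨hp, n, hn, hpn⟩
        rw [Ideal.mem_span_range_iff_exists_fun] at h1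
        obtain ⟨a, ha⟩ := h1
        have h2 := avg_self hp
        rw [← ha, map_sum] at h2
        simp only [avg_mul (hfi _)] at h2
        rw [ha] at h2
        rw [← homogeneousComponent_eq_self hpn, ← h2, map_sum]
        refine Subalgebra.sum_mem _ fun i _ => ?_
        rw [homogeneousComponent_mul_of_isHomogeneous (hf i)]
        split_ifs with h
        · refine Subalgebra.mul_mem _ ?_ (Algebra.subset_adjoin ⟨i, rfl⟩)
          exact ih (n - d i) (by have := hd i; omega) _ (hG.comp_mem (avg_mem _) _)
            (homogeneousComponent_isHomogeneous _ _)
        · exact Subalgebra.zero_mem _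
  intro p hp
  rw [← sum_homogeneousComponent p]
  exact Subalgebra.sum_mem _ fun i _ => H i _ (hG.comp_mem hp i)
    (homogeneousComponent_isHomogeneous i p)

/-- Chevalley's theorem: the invariants of a finite reflection group form a polynomial algebra on
as many homogeneous generators as there are variables. -/
theorem chevalley (hG : GradedAction G) (hR : ReflGen G) :
    ∃ (f : κ → MvPolynomial κ ℂ) (d : κ → ℕ), (∀ i, (f i).IsHomogeneous (d i)) ∧
      (∀ i, 0 < d i) ∧ AlgebraicIndependent ℂ f ∧ invs G = Algebra.adjoin ℂ (Set.range f) := by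
  classical
  -- a generating set of least cardinality
  obtain ⟨F, hF, hFs, hFmin⟩ : ∃ F : Finset (MvPolynomial κ ℂ), (F : Set _) ⊆ posInvs G ∧
      Ideal.span (F : Set (MvPolynomial κ ℂ)) = Ideal.span (posInvs G) ∧
      ∀ p ∈ F, p ∉ Ideal.span (F.erase p : Set (MvPolynomial κ ℂ)) := by
    have hex : ∃ n, ∃ F : Finset (MvPolynomial κ ℂ), F.card = n ∧ (F : Set _) ⊆ posInvs G ∧
        Ideal.span (F : Set (MvPolynomial κ ℂ)) = Ideal.span (posInvs G) := by
      obtain ⟨F, h1, h2⟩ := (Submodule.fg_span_iff_fg_span_finset_subset (posInvs G)).1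
        (IsNoetherian.noetherian (Ideal.span (posInvs G)))
      exact ⟨_, F, rfl, h1, h2.symm⟩
    obtain ⟨F, hc, h1, h2⟩ := Nat.find_spec hex
    refine ⟨F, h1, h2, fun p hp hmem => ?_⟩
    refine Nat.find_min hex (m := (F.erase p).card) ?_ ⟨_, rfl, fun q hq => h1 ?_, ?_⟩
    · rw [← hc]; exact Finset.card_erase_lt_of_mem hp
    · exact Finset.mem_of_mem_erase hq
    · rw [← h2]
      refine le_antisymm (Ideal.span_mono fun q hq => Finset.mem_of_mem_erase hq) ?_
      rw [Ideal.span_le]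
      intro q hq
      by_cases hqp : q = p
      · rw [hqp]; exact hmem
      · exact Ideal.subset_span (Finset.mem_erase.2 ⟨hqp, hq⟩)
  let f : F → MvPolynomial κ ℂ := Subtype.val
  have hposF : ∀ i : F, ∃ n, 0 < n ∧ (f i).IsHomogeneous n := fun i => (hF i.2).2
  choose d hd hf using hposF
  have hrange : Set.range f = F := Subtype.range_coe
  have hspan : Ideal.span (Set.range f) = Ideal.span (posInvs G) := by rw [hrange, hFs]
  have hfi : ∀ i, f i ∈ invs G := fun i => (hF i.2).1
  have hind : AlgebraicIndependent ℂ f := by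
    refine algebraicIndependent_of_minimal hG hR hd hf hfi hspan fun j hj => hFmin j j.2 ?_
    refine Ideal.span_mono ?_ hj
    rintro _ ⟨i, hi, rfl⟩
    exact Finset.mem_erase.2 ⟨fun h => hi (Subtype.ext h), i.2⟩
  have hgen : invs G = Algebra.adjoin ℂ (Set.range f) := by
    refine le_antisymm (invs_le_adjoin hG hd hf hfi hspan) ?_
    rw [Algebra.adjoin_le_iff]
    rintro _ ⟨i, rfl⟩
    exact hfi i
  -- the polynomial ring is integral over the invariants, so transcendence degrees agree
  have hinv : Algebra.IsInvariant (Algebra.adjoin ℂ (Set.range f)) (MvPolynomial κ ℂ) G := by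
    refine ⟨fun b hb => ?_⟩
    have : b ∈ Algebra.adjoin ℂ (Set.range f) := by
      rw [← hgen]
      exact fun g hg => hb ⟨g, hg⟩
    exact ⟨⟨b, this⟩, rfl⟩
  have hcomm : SMulCommClass G (Algebra.adjoin ℂ (Set.range f)) (MvPolynomial κ ℂ) := by
    refine ⟨fun g a b => ?_⟩
    have ha : (a : MvPolynomial κ ℂ) ∈ invs G := by rw [hgen]; exact a.2
    change (g : MvPolynomial κ ℂ ≃ₐ[ℂ] MvPolynomial κ ℂ) ((a : MvPolynomial κ ℂ) * b) =
      (a : MvPolynomial κ ℂ) * (g : MvPolynomial κ ℂ ≃ₐ[ℂ] MvPolynomial κ ℂ) b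
    rw [map_mul, ha g g.2]
  have hintegral : Algebra.IsIntegral (Algebra.adjoin ℂ (Set.range f)) (MvPolynomial κ ℂ) :=
    Algebra.IsInvariant.isIntegral _ _ G
  have htb : IsTranscendenceBasis ℂ f :=
    hind.isTranscendenceBasis_iff_isAlgebraic.2 inferInstance
  have hcard := htb.lift_cardinalMk_eq (IsTranscendenceBasis.mvPolynomial κ ℂ)
  have e : F ≃ κ := by
    refine (Cardinal.lift_mk_eq'.1 ?_).some
    exact hcard
  refine ⟨f ∘ e.symm, d ∘ e.symm, fun i => hf _, fun i => hd _, hind.comp _ e.symm.injective, ?_⟩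
  rw [hgen, EquivLike.range_comp]

end Chevalley

end CenterUEA

/-! ### The filtration of the enveloping algebra and symmetrization -/

namespace CenterUEA

open MvPolynomial

section Filtration

variable (L : Type*) [LieRing L] [LieAlgebra ℂ L]

/-- The canonical map `L → U(L)`, as a linear map. -/
noncomputable def inc : L →ₗ[ℂ] UniversalEnvelopingAlgebra ℂ L :=
  letI := LieRing.ofAssociativeRing (A := UniversalEnvelopingAlgebra ℂ L)
  (UniversalEnvelopingAlgebra.ι ℂ : L →ₗ⁅ℂ⁆ UniversalEnvelopingAlgebra ℂ L).toLinearMap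

/-- The standard filtration of `U(L)`: the span of the products of at most `d` elements of `L`. -/
noncomputable def UF (d : ℕ) : Submodule ℂ (UniversalEnvelopingAlgebra ℂ L) :=
  (1 ⊔ LinearMap.range (inc L)) ^ d

/-- The filtration shifted by one: `UL d` consists of the elements of degree `< d`. -/
noncomputable def UL : ℕ → Submodule ℂ (UniversalEnvelopingAlgebra ℂ L)
  | 0 => ⊥
  | d + 1 => UF L d

variable {L}

local notation "U" => UniversalEnvelopingAlgebra ℂ L

lemma inc_lie (x y : L) : inc L ⁅x, y⁆ = inc L x * inc L y - inc L y * inc L x :=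
  let _ := LieRing.ofAssociativeRing (A := U)
  LieHom.map_lie (UniversalEnvelopingAlgebra.ι ℂ) x y

lemma exists_lift {A : Type*} [Ring A] [Algebra ℂ A] (f : L →ₗ[ℂ] A)
    (hf : ∀ x y, f ⁅x, y⁆ = f x * f y - f y * f x) :
    ∃ F : U →ₐ[ℂ] A, ∀ x, F (inc L x) = f x := by
  let _ := LieRing.ofAssociativeRing (A := A)
  let f' : L →ₗ⁅ℂ⁆ A := { f with map_lie' := fun {x y} => hf x y }
  exact ⟨UniversalEnvelopingAlgebra.lift ℂ f', fun x =>
    UniversalEnvelopingAlgebra.lift_ι_apply ℂ f' x⟩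

lemma adjoin_inc : Algebra.adjoin ℂ (Set.range (inc L)) = ⊤ := by
  obtain ⟨F, hF⟩ := exists_lift (L := L)
    (A := Algebra.adjoin ℂ (Set.range (inc L)))
    ((inc L).codRestrict (Subalgebra.toSubmodule (Algebra.adjoin ℂ (Set.range (inc L))))
      fun x => Algebra.subset_adjoin ⟨x, rfl⟩)
    (fun x y => Subtype.ext (inc_lie x y))
  have h : (Subalgebra.val _).comp F = AlgHom.id ℂ U := by
    let _ := LieRing.ofAssociativeRing (A := U)
    refine UniversalEnvelopingAlgebra.hom_ext ℂ ?_
    refine LieHom.ext fun x => ?_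
    exact congrArg Subtype.val (hF x)
  rw [eq_top_iff]
  intro u _
  have : ((F u : Algebra.adjoin ℂ (Set.range (inc L))) : U) = u := DFunLike.congr_fun h u
  rw [← this]
  exact (F u).2

lemma UF_mono : Monotone (UF L) := by
  intro a b h
  exact pow_le_pow_right₀ le_sup_left h

lemma mul_mem_UF {a b : ℕ} {u v : U} (hu : u ∈ UF L a) (hv : v ∈ UF L b) :
    u * v ∈ UF L (a + b) := by
  rw [UF, pow_add]; exact Submodule.mul_mem_mul hu hv

lemma algebraMap_mem_UF (c : ℂ) : algebraMap ℂ U c ∈ UF L 0 := by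
  rw [UF, pow_zero]; exact Submodule.algebraMap_mem c

lemma inc_mem_UF (x : L) : inc L x ∈ UF L 1 := by
  rw [UF, pow_one]; exact Submodule.mem_sup_right ⟨x, rfl⟩

lemma exists_mem_UF (u : U) : ∃ d, u ∈ UF L d := by
  have hu : u ∈ Algebra.adjoin ℂ (Set.range (inc L)) := by rw [adjoin_inc]; trivial
  induction hu using Algebra.adjoin_induction with
  | mem x hx => obtain ⟨y, rfl⟩ := hx; exact ⟨1, inc_mem_UF y⟩
  | algebraMap r => exact ⟨0, algebraMap_mem_UF r⟩
  | add x y _ _ hx hy =>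
    obtain ⟨a, ha⟩ := hx
    obtain ⟨b, hb⟩ := hy
    exact ⟨max a b, add_mem (UF_mono (le_max_left a b) ha) (UF_mono (le_max_right a b) hb)⟩
  | mul x y _ _ hx hy =>
    obtain ⟨a, ha⟩ := hx
    obtain ⟨b, hb⟩ := hy
    exact ⟨a + b, mul_mem_UF ha hb⟩

lemma UL_le_UF (d : ℕ) : UL L d ≤ UF L d := by
  cases d with
  | zero => exact bot_le
  | succ d => exact UF_mono (Nat.le_succ d)

lemma mul_mem_UL_left {a b : ℕ} {u v : U} (hu : u ∈ UL L a) (hv : v ∈ UF L b) :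
    u * v ∈ UL L (a + b) := by
  cases a with
  | zero => rw [(Submodule.mem_bot ℂ).1 hu, zero_mul]; exact zero_mem _
  | succ a => rw [Nat.succ_add]; exact mul_mem_UF hu hv

lemma mul_mem_UL_right {a b : ℕ} {u v : U} (hu : u ∈ UF L a) (hv : v ∈ UL L b) :
    u * v ∈ UL L (a + b) := by
  cases b with
  | zero => rw [(Submodule.mem_bot ℂ).1 hv, mul_zero]; exact zero_mem _
  | succ b => exact mul_mem_UF hu hv

lemma UF_induction {P : ℕ → U → Prop} (h0 : ∀ c, P 0 (algebraMap ℂ U c))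
    (hadd : ∀ d u v, P d u → P d v → P d (u + v))
    (hsmul : ∀ d (c : ℂ) u, P d u → P d (c • u))
    (hsucc : ∀ d u, u ∈ UF L d → P d u → P (d + 1) u)
    (hmul : ∀ d u (x : L), u ∈ UF L d → P d u → P (d + 1) (u * inc L x))
    {d : ℕ} {u : U} (hu : u ∈ UF L d) : P d u := by
  rw [UF] at hu
  refine Submodule.pow_induction_on_right' _ (C := fun n x _ => P n x) h0
    (fun x y i _ _ h1 h2 => hadd _ _ _ h1 h2) (fun i x hx h m hm => ?_) hu
  obtain ⟨a, ha, b, ⟨y, rfl⟩, rfl⟩ := Submodule.mem_sup.1 hm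
  obtain ⟨c, rfl⟩ := Submodule.mem_one.1 ha
  rw [mul_add, ← Algebra.commutes, ← Algebra.smul_def]
  exact hadd _ _ _ (hsmul _ _ _ (hsucc _ _ hx h)) (hmul _ _ _ hx h)

/-- Commutation with `x ∈ L` preserves the filtration. -/
lemma inc_commutator_mem (x : L) {d : ℕ} {u : U} (hu : u ∈ UF L d) :
    inc L x * u - u * inc L x ∈ UF L d := by
  refine UF_induction (P := fun d u => inc L x * u - u * inc L x ∈ UF L d) ?_ ?_ ?_ ?_ ?_ hu
  · intro c
    rw [← Algebra.commutes, sub_self]; exact zero_mem _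
  · intro d u v h1 h2
    have : inc L x * (u + v) - (u + v) * inc L x =
      (inc L x * u - u * inc L x) + (inc L x * v - v * inc L x) := by noncomm_ring
    rw [this]; exact add_mem h1 h2
  · intro d c u h
    rw [mul_smul_comm, smul_mul_assoc, ← smul_sub]; exact (UF L d).smul_mem c h
  · intro d u _ h
    exact UF_mono (Nat.le_succ d) h
  · intro d u y hu h
    have : inc L x * (u * inc L y) - u * inc L y * inc L x =
      (inc L x * u - u * inc L x) * inc L y + u * inc L ⁅x, y⁆ := by
      rw [inc_lie]; noncomm_ring
    rw [this]
    exact add_mem (mul_mem_UF h (inc_mem_UF y)) (mul_mem_UF hu (inc_mem_UF _))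

end Filtration

section Symmetrization

variable {L : Type*} [LieRing L] [LieAlgebra ℂ L] {ι : Type*} [Fintype ι] (b : Module.Basis ι ℂ L)

local notation "U" => UniversalEnvelopingAlgebra ℂ L

/-- The symmetrization map in degree `d`, from the symmetric algebra of `L` (polynomials in the
basis `b`) to `U(L)`; it only sees the homogeneous component of degree `d`. -/
noncomputable def symz : ℕ → MvPolynomial ι ℂ →ₗ[ℂ] UniversalEnvelopingAlgebra ℂ L
  | 0 => (Algebra.linearMap ℂ _) ∘ₗ (lcoeff ℂ 0)
  | d + 1 => ((d : ℂ) + 1)⁻¹ • ∑ i, (LinearMap.mulRight ℂ (inc L (b i))) ∘ₗ (symz d) ∘ₗ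
      (pderiv i).toLinearMap

lemma symz_zero (p : MvPolynomial ι ℂ) : symz b 0 p = algebraMap ℂ U (coeff 0 p) := rfl

lemma symz_succ (d : ℕ) (p : MvPolynomial ι ℂ) : symz b (d + 1) p =
    ((d : ℂ) + 1)⁻¹ • ∑ i, symz b d (pderiv i p) * inc L (b i) := by
  simp [symz]

lemma symz_succ' (d : ℕ) (p : MvPolynomial ι ℂ) :
    ∑ i, symz b d (pderiv i p) * inc L (b i) = ((d : ℂ) + 1) • symz b (d + 1) p := by
  rw [symz_succ, smul_inv_smul₀ (Nat.cast_add_one_ne_zero d)]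

lemma symz_mem (d : ℕ) (p : MvPolynomial ι ℂ) : symz b d p ∈ UF L d := by
  induction d generalizing p with
  | zero => exact algebraMap_mem_UF _
  | succ d ih =>
    rw [symz_succ]
    exact (UF L _).smul_mem _ (sum_mem fun i _ => mul_mem_UF (ih _) (inc_mem_UF _))

lemma symz_X_mul (d : ℕ) (i : ι) (q : MvPolynomial ι ℂ) :
    symz b (d + 1) (X i * q) - symz b d q * inc L (b i) ∈ UL L (d + 1) := by
  classical
  induction d generalizing i q with
  | zero =>
    have h : ∀ k, symz b 0 (pderiv k (X i * q)) = if k = i then symz b 0 q else 0 := by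
      intro k
      rw [Derivation.leibniz, map_add, pderiv_X, symz_zero, symz_zero, smul_eq_mul, smul_eq_mul,
        coeff_X_mul']
      simp only [symz_zero, Pi.single_apply]
      by_cases hki : k = i
      · subst hki; simp
      · rw [if_neg (Ne.symm hki)]; simp [hki]
    rw [symz_succ]
    simp only [h]
    simp
  | succ e ih =>
    have h1 : ∀ k, symz b (e + 1) (pderiv k (X i * q)) =
        symz b (e + 1) (X i * pderiv k q) + if k = i then symz b (e + 1) q else 0 := by
      intro k
      rw [Derivation.leibniz, map_add, pderiv_X, smul_eq_mul, smul_eq_mul, Pi.single_apply]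
      by_cases hki : k = i
      · subst hki; simp
      · simp [hki, Ne.symm hki]
    have h2 : ∑ k, symz b (e + 1) (X i * pderiv k q) * inc L (b k) -
        ((e : ℂ) + 1) • symz b (e + 1) q * inc L (b i) ∈ UL L (e + 1 + 1) := by
      rw [← symz_succ', Finset.sum_mul, ← Finset.sum_sub_distrib]
      refine sum_mem fun k _ => ?_
      have h3 : symz b (e + 1) (X i * pderiv k q) * inc L (b k) -
          symz b e (pderiv k q) * inc L (b k) * inc L (b i) =
          (symz b (e + 1) (X i * pderiv k q) - symz b e (pderiv k q) * inc L (b i)) * inc L (b k) +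
          symz b e (pderiv k q) * inc L ⁅b i, b k⁆ := by
        rw [inc_lie]; noncomm_ring
      rw [h3]
      exact add_mem (mul_mem_UL_left (ih i _) (inc_mem_UF _))
        (mul_mem_UF (symz_mem b e _) (inc_mem_UF _))
    have h4 : symz b (e + 1 + 1) (X i * q) - symz b (e + 1) q * inc L (b i) =
        ((e : ℂ) + 1 + 1)⁻¹ • (∑ k, symz b (e + 1) (X i * pderiv k q) * inc L (b k) -
        ((e : ℂ) + 1) • symz b (e + 1) q * inc L (b i)) := by
      have h5 : ((e : ℂ) + 1 + 1) ≠ 0 := by exact_mod_cast Nat.succ_ne_zero (e + 1)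
      rw [symz_succ]
      simp only [h1, add_mul, Finset.sum_add_distrib, ite_mul, zero_mul, Finset.sum_ite_eq',
        Finset.mem_univ, if_true]
      push_cast
      rw [eq_inv_smul_iff₀ h5, smul_sub, smul_inv_smul₀ h5, smul_mul_assoc]
      module
    rw [h4]
    exact (UL L _).smul_mem _ h2

lemma hom_induction {P : ℕ → MvPolynomial ι ℂ → Prop} (hC : ∀ a, P 0 (C a))
    (hz : ∀ d, P d 0) (hadd : ∀ d p q, P d p → P d q → P d (p + q))
    (hmul : ∀ d i p, p.IsHomogeneous d → P d p → P (d + 1) (X i * p))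
    {d : ℕ} {p : MvPolynomial ι ℂ} (hp : p.IsHomogeneous d) : P d p := by
  classical
  have hmon : ∀ d (s : ι →₀ ℕ) (a : ℂ), s.degree = d → P d (monomial s a) := by
    intro d
    induction d with
    | zero =>
      intro s a hs
      rw [Finsupp.degree_eq_zero_iff] at hs
      rw [hs]; exact hC a
    | succ d ih =>
      intro s a hs
      have hs0 : s ≠ 0 := by rintro rfl; simp at hs
      obtain ⟨i, hi⟩ := Finsupp.support_nonempty_iff.2 hs0
      have h1 : Finsupp.single i 1 ≤ s := by
        rw [Finsupp.single_le_iff]; exact Nat.one_le_iff_ne_zero.2 (Finsupp.mem_support_iff.1 hi)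
      obtain ⟨t, rfl⟩ := exists_add_of_le h1
      have ht : t.degree = d := by
        rw [map_add, Finsupp.degree_single] at hs; omega
      have : monomial (Finsupp.single i 1 + t) a = X i * monomial t a := by
        rw [X, monomial_mul, one_mul]
      rw [this]
      exact hmul _ _ _ (isHomogeneous_monomial a ht) (ih t a ht)
  rw [p.as_sum]
  refine Finset.sum_induction _ _ (hadd d) (hz d) fun s hs => hmon d s _ ?_
  have := hp (mem_support_iff.1 hs)
  rwa [Finsupp.degree_eq_weight_one]

/-- Symmetrization is multiplicative up to terms of lower degree. -/
lemma symz_mul {d e : ℕ} (p : MvPolynomial ι ℂ) {q : MvPolynomial ι ℂ} (hq : q.IsHomogeneous e) :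
    symz b (d + e) (q * p) - symz b d p * symz b e q ∈ UL L (d + e) := by
  refine hom_induction (P := fun e q =>
    symz b (d + e) (q * p) - symz b d p * symz b e q ∈ UL L (d + e)) ?_ ?_ ?_ ?_ hq
  · intro a
    have : symz b (d + 0) (C a * p) - symz b d p * symz b 0 (C a) = 0 := by
      rw [symz_zero, coeff_zero_C, ← Algebra.commutes, ← Algebra.smul_def, ← smul_eq_C_mul, map_smul,
        add_zero, sub_self]
    rw [this]; exact zero_mem _
  · intro e; simp
  · intro e q r h1 h2
    have : symz b (d + e) ((q + r) * p) - symz b d p * symz b e (q + r) =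
      (symz b (d + e) (q * p) - symz b d p * symz b e q) +
      (symz b (d + e) (r * p) - symz b d p * symz b e r) := by
      rw [add_mul, map_add, map_add]; noncomm_ring
    rw [this]; exact add_mem h1 h2
  · intro e i q _ h
    have : symz b (d + (e + 1)) (X i * q * p) - symz b d p * symz b (e + 1) (X i * q) =
      (symz b (d + e + 1) (X i * (q * p)) - symz b (d + e) (q * p) * inc L (b i)) +
      (symz b (d + e) (q * p) - symz b d p * symz b e q) * inc L (b i) -
      symz b d p * (symz b (e + 1) (X i * q) - symz b e q * inc L (b i)) := by
      rw [mul_assoc (X i), ← add_assoc]; noncomm_ring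
    rw [this]
    exact sub_mem (add_mem (symz_X_mul b _ _ _) (mul_mem_UL_left (a := d + e) h (inc_mem_UF _)))
      (mul_mem_UL_right (symz_mem b d p) (symz_X_mul b _ _ _))

/-- Every element of degree `≤ d` is a symmetrized polynomial up to terms of lower degree. -/
lemma exists_symz {d : ℕ} {u : U} (hu : u ∈ UF L d) :
    ∃ p : MvPolynomial ι ℂ, p.IsHomogeneous d ∧ u - symz b d p ∈ UL L d := by
  refine UF_induction (P := fun d u => ∃ p : MvPolynomial ι ℂ, p.IsHomogeneous d ∧
    u - symz b d p ∈ UL L d) ?_ ?_ ?_ ?_ ?_ hu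
  · intro c
    refine ⟨C c, isHomogeneous_C _ _, ?_⟩
    rw [symz_zero, coeff_zero_C, sub_self]; exact zero_mem _
  · rintro d u v ⟨p, hp, h1⟩ ⟨q, hq, h2⟩
    refine ⟨p + q, hp.add hq, ?_⟩
    rw [map_add, add_sub_add_comm]; exact add_mem h1 h2
  · rintro d c u ⟨p, hp, h1⟩
    refine ⟨c • p, (homogeneousSubmodule ι ℂ d).smul_mem c hp, ?_⟩
    rw [map_smul, ← smul_sub]; exact (UL L d).smul_mem c h1
  · rintro d u hu -
    exact ⟨0, isHomogeneous_zero _ _ _, by rw [map_zero, sub_zero]; exact hu⟩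
  · rintro d u x hu ⟨p, hp, h1⟩
    refine ⟨(∑ i, C (b.repr x i) * X i) * p, ?_, ?_⟩
    · rw [add_comm]
      refine IsHomogeneous.mul (IsHomogeneous.sum _ _ _ fun i _ => ?_) hp
      exact (isHomogeneous_C_mul_X _ _)
    · have h2 : u * inc L x - symz b (d + 1) ((∑ i, C (b.repr x i) * X i) * p) =
          (u - symz b d p) * inc L x -
          ∑ i, b.repr x i • (symz b (d + 1) (X i * p) - symz b d p * inc L (b i)) := by
        have h3 : symz b d p * inc L x = ∑ i, b.repr x i • (symz b d p * inc L (b i)) := by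
          conv_lhs => rw [← b.sum_repr x, map_sum, Finset.mul_sum]
          simp only [map_smul, mul_smul_comm]
        have h4 : symz b (d + 1) ((∑ i, C (b.repr x i) * X i) * p) =
            ∑ i, b.repr x i • symz b (d + 1) (X i * p) := by
          rw [Finset.sum_mul, map_sum]
          simp only [mul_assoc, ← smul_eq_C_mul, map_smul, smul_mul_assoc]
        simp only [smul_sub, Finset.sum_sub_distrib, ← h3, ← h4, sub_mul]
        abel
      rw [h2]
      exact sub_mem (mul_mem_UL_left h1 (inc_mem_UF _)) (sum_mem fun i _ =>
        (UL L _).smul_mem _ (symz_X_mul b _ _ _))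

/-- The adjoint action on the symmetric algebra of `L`. -/
noncomputable def adS (x : L) : Derivation ℂ (MvPolynomial ι ℂ) (MvPolynomial ι ℂ) :=
  mkDerivation ℂ fun i => ∑ j, C (b.repr ⁅x, b i⁆ j) * X j

lemma adS_X (x : L) (i : ι) : adS b x (X i) = ∑ j, C (b.repr ⁅x, b i⁆ j) * X j :=
  mkDerivation_X _ _ _

lemma derivation_eq_sum (D : Derivation ℂ (MvPolynomial ι ℂ) (MvPolynomial ι ℂ))
    (p : MvPolynomial ι ℂ) : D p = ∑ i, pderiv i p * D (X i) := by
  simpa using derivation_aeval D X p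

lemma adS_isHomogeneous (x : L) {d : ℕ} {p : MvPolynomial ι ℂ} (hp : p.IsHomogeneous d) :
    (adS b x p).IsHomogeneous d := by
  rw [derivation_eq_sum]
  refine IsHomogeneous.sum _ _ _ fun i _ => ?_
  have h1 : (adS b x (X i)).IsHomogeneous 1 := by
    rw [adS_X]; exact IsHomogeneous.sum _ _ _ fun j _ => isHomogeneous_C_mul_X _ _
  cases d with
  | zero =>
    have : pderiv i p = 0 := by
      have h0 : p = C (coeff 0 p) := totalDegree_eq_zero_iff_eq_C.1
        (Nat.le_zero.1 (IsHomogeneous.totalDegree_le hp))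
      rw [h0, pderiv_C]
    rw [this, zero_mul]; exact isHomogeneous_zero _ _ _
  | succ d => exact hp.pderiv.mul h1

lemma pderiv_adS (x : L) (i : ι) (p : MvPolynomial ι ℂ) : pderiv i (adS b x p) =
    adS b x (pderiv i p) + ∑ k, C (b.repr ⁅x, b k⁆ i) * pderiv k p := by
  classical
  have h : ⁅(pderiv i : Derivation ℂ (MvPolynomial ι ℂ) (MvPolynomial ι ℂ)), adS b x⁆ p =
      ∑ k, C (b.repr ⁅x, b k⁆ i) * pderiv k p := by
    rw [derivation_eq_sum]
    refine Finset.sum_congr rfl fun k _ => ?_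
    rw [Derivation.commutator_apply, adS_X, map_sum, pderiv_X, mul_comm]
    congr 1
    have : adS b x (Pi.single (M := fun _ => MvPolynomial ι ℂ) i 1 k) = 0 := by
      rw [Pi.single_apply]; split_ifs <;> simp
    rw [this, sub_zero]
    simp [Derivation.leibniz, pderiv_X, Pi.single_apply]
  rw [← h, Derivation.commutator_apply]; ring

/-- Symmetrization is equivariant. -/
lemma symz_adS (x : L) (d : ℕ) (p : MvPolynomial ι ℂ) :
    symz b d (adS b x p) = inc L x * symz b d p - symz b d p * inc L x := by
  induction d generalizing p with
  | zero =>
    rw [symz_zero, symz_zero, ← Algebra.commutes, sub_self]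
    have : coeff 0 (adS b x p) = 0 := by
      rw [derivation_eq_sum, coeff_sum]
      refine Finset.sum_eq_zero fun i _ => ?_
      rw [← constantCoeff_eq, map_mul, adS_X]
      simp
    rw [this, map_zero]
  | succ d ih =>
    have h1 : ∀ i, inc L ⁅x, b i⁆ = ∑ k, b.repr ⁅x, b i⁆ k • inc L (b k) := by
      intro i
      conv_lhs => rw [← b.sum_repr ⁅x, b i⁆, map_sum]
      simp only [map_smul]
    have h2 : ∑ i, symz b d (pderiv i (adS b x p)) * inc L (b i) =
        inc L x * (∑ i, symz b d (pderiv i p) * inc L (b i)) -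
        (∑ i, symz b d (pderiv i p) * inc L (b i)) * inc L x := by
      have h3 : ∑ i, symz b d (∑ k, C (b.repr ⁅x, b k⁆ i) * pderiv k p) * inc L (b i) =
          ∑ i, symz b d (pderiv i p) * inc L ⁅x, b i⁆ := by
        simp only [h1, map_sum, ← smul_eq_C_mul, map_smul, Finset.sum_mul, Finset.mul_sum,
          smul_mul_assoc, mul_smul_comm]
        rw [Finset.sum_comm]
      simp only [pderiv_adS, map_add, ih, add_mul, Finset.sum_add_distrib, h3]
      rw [← Finset.sum_add_distrib, Finset.mul_sum, Finset.sum_mul, ← Finset.sum_sub_distrib]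
      refine Finset.sum_congr rfl fun i _ => ?_
      rw [inc_lie]; noncomm_ring
    rw [symz_succ, symz_succ, h2, smul_sub, mul_smul_comm, smul_mul_assoc]

end Symmetrization

end CenterUEA

/-! ### Injectivity of symmetrization (Poincaré–Birkhoff–Witt) -/

namespace CenterUEA

open MvPolynomial

section Injectivity

variable {L : Type*} [LieRing L] [LieAlgebra ℂ L] {ι : Type*} [Fintype ι] (b : Module.Basis ι ℂ L)

local notation "U" => UniversalEnvelopingAlgebra ℂ L

/-- The action of `L` by derivations on the polynomial functions in the entries of a square
matrix, through right multiplication by the adjoint representation. -/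
noncomputable def matD (x : L) :
    Derivation ℂ (MvPolynomial (ι × ι) ℂ) (MvPolynomial (ι × ι) ℂ) :=
  mkDerivation ℂ fun p => ∑ k, C (b.repr ⁅x, b p.2⁆ k) * X (p.1, k)

lemma matD_X (x : L) (i j : ι) :
    matD b x (X (i, j)) = ∑ k, C (b.repr ⁅x, b j⁆ k) * X (i, k) :=
  mkDerivation_X _ _ _

lemma repr_lie (x y : L) (j k : ι) :
    b.repr ⁅x, ⁅y, b j⁆⁆ k = ∑ l, b.repr ⁅y, b j⁆ l * b.repr ⁅x, b l⁆ k := by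
  conv_lhs => rw [← b.sum_repr ⁅y, b j⁆, lie_sum]
  simp only [lie_smul, map_sum, map_smul, Finsupp.coe_finsetSum, Finset.sum_apply,
    Finsupp.smul_apply, smul_eq_mul]

lemma matD_matD_X (x y : L) (i j : ι) :
    matD b x (matD b y (X (i, j))) = ∑ k, C (b.repr ⁅x, ⁅y, b j⁆⁆ k) * X (i, k) := by
  simp only [matD_X, map_sum, Derivation.leibniz, derivation_C, smul_zero, add_zero, smul_eq_mul,
    repr_lie, Finset.mul_sum, Finset.sum_mul, map_mul]
  rw [Finset.sum_comm]
  refine Finset.sum_congr rfl fun k _ => ?_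
  rw [mul_zero, add_zero]
  exact Finset.sum_congr rfl fun l _ => by ring

lemma matD_lie (x y : L) : matD b ⁅x, y⁆ = ⁅matD b x, matD b y⁆ := by
  refine derivation_ext fun ⟨i, j⟩ => ?_
  rw [Derivation.commutator_apply, matD_matD_X, matD_matD_X, matD_X, ← Finset.sum_sub_distrib]
  refine Finset.sum_congr rfl fun k _ => ?_
  rw [lie_lie, map_sub, Finsupp.sub_apply, map_sub, sub_mul]

lemma exists_matAction : ∃ ρ : U →ₐ[ℂ] Module.End ℂ (MvPolynomial (ι × ι) ℂ),
    ∀ x q, ρ (inc L x) q = matD b x q := by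
  let f : L →ₗ[ℂ] Module.End ℂ (MvPolynomial (ι × ι) ℂ) :=
    { toFun := fun x => (matD b x).toLinearMap
      map_add' := by
        intro x y
        have : matD b (x + y) = matD b x + matD b y := by
          refine derivation_ext fun ⟨i, j⟩ => ?_
          rw [Derivation.add_apply, matD_X, matD_X, matD_X, ← Finset.sum_add_distrib]
          refine Finset.sum_congr rfl fun k _ => ?_
          rw [add_lie, map_add, Finsupp.add_apply, map_add, add_mul]
        rw [this]; rfl
      map_smul' := by
        intro c x
        have : matD b (c • x) = c • matD b x := by
          refine derivation_ext fun ⟨i, j⟩ => ?_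
          rw [Derivation.smul_apply, matD_X, matD_X, Finset.smul_sum]
          refine Finset.sum_congr rfl fun k _ => ?_
          rw [smul_lie, map_smul, Finsupp.smul_apply, smul_eq_mul, C_mul, mul_assoc,
            smul_eq_C_mul]
        rw [this]; rfl }
  obtain ⟨F, hF⟩ := exists_lift f fun x y => by
    refine LinearMap.ext fun q => ?_
    change matD b ⁅x, y⁆ q = matD b x (matD b y q) - matD b y (matD b x q)
    rw [matD_lie, Derivation.commutator_apply]
  exact ⟨F, fun x q => by rw [hF]; rfl⟩

/-- When the adjoint representation is faithful, every linear functional on `L` is the derivative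
at the identity of a function of the matrix entries vanishing at the identity. -/
lemma exists_function [DecidableEq ι] (hL : ∀ x : L, (∀ y : L, ⁅x, y⁆ = 0) → x = 0) (ℓ : ι → ℂ) :
    ∃ f : MvPolynomial (ι × ι) ℂ, eval (fun p => if p.1 = p.2 then 1 else 0) f = 0 ∧
      ∀ i, eval (fun p => if p.1 = p.2 then 1 else 0) (matD b (b i) f) = ℓ i := by
  let M : L →ₗ[ℂ] (ι × ι → ℂ) :=
    { toFun := fun x p => b.repr ⁅x, b p.2⁆ p.1
      map_add' := fun x y => by ext p; simp
      map_smul' := fun c x => by ext p; simp }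
  have hM : Function.Injective M := by
    rw [injective_iff_map_eq_zero]
    intro x hx
    refine hL x fun y => ?_
    have h1 : ∀ j, ⁅x, b j⁆ = 0 := fun j => by
      refine b.repr.injective (Finsupp.ext fun i => ?_)
      rw [map_zero]
      exact congrFun hx (i, j)
    rw [← b.sum_repr y, lie_sum]
    exact Finset.sum_eq_zero fun j _ => by rw [lie_smul, h1, smul_zero]
  obtain ⟨φ, hφ⟩ := LinearMap.dualMap_surjective_of_injective hM (b.constr ℂ ℓ)
  refine ⟨∑ p, C (φ (Pi.single p 1)) * (X p - C (if p.1 = p.2 then 1 else 0)), ?_, fun i => ?_⟩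
  · simp
  · have h1 : φ (M (b i)) = ℓ i := by
      have := DFunLike.congr_fun hφ (b i)
      rwa [Module.Basis.constr_basis] at this
    rw [← h1, LinearMap.pi_apply_eq_sum_univ φ (M (b i)), map_sum, map_sum]
    refine Finset.sum_congr rfl fun p _ => ?_
    rw [Derivation.leibniz, derivation_C, smul_zero, add_zero, map_sub, derivation_C, sub_zero,
      matD_X, smul_eq_mul, map_mul, eval_C, map_sum, smul_eq_mul, mul_comm]
    congr 1
    · simp only [map_mul, eval_C, eval_X, mul_ite, mul_one, mul_zero, Finset.sum_ite_eq,
        Finset.mem_univ, if_true]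
      rfl
    · congr 1
      ext q
      simp [Pi.single_apply, eq_comm]

variable {b}

/-- An element of degree `≤ d` acts as a differential operator of order `≤ d`, and so lowers the
order of divisibility by `f` by at most `d`. -/
lemma dvd_of_mem_UF {ρ : U →ₐ[ℂ] Module.End ℂ (MvPolynomial (ι × ι) ℂ)}
    (hρ : ∀ x q, ρ (inc L x) q = matD b x q) (f : MvPolynomial (ι × ι) ℂ)
    {d : ℕ} {u : U} (hu : u ∈ UF L d) :
    ∀ (n : ℕ) (h : MvPolynomial (ι × ι) ℂ), f ^ (n + d) ∣ h → f ^ n ∣ ρ u h := by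
  refine UF_induction (P := fun d u => ∀ (n : ℕ) (h : MvPolynomial (ι × ι) ℂ),
    f ^ (n + d) ∣ h → f ^ n ∣ ρ u h) ?_ ?_ ?_ ?_ ?_ hu
  · intro c n h hh
    rw [AlgHom.commutes, Module.algebraMap_end_apply]
    exact dvd_smul_of_dvd c ((pow_dvd_pow f (by omega)).trans hh)
  · intro d u v h1 h2 n h hh
    rw [map_add, LinearMap.add_apply]
    exact dvd_add (h1 n h hh) (h2 n h hh)
  · intro d c u h1 n h hh
    rw [map_smul, LinearMap.smul_apply]
    exact dvd_smul_of_dvd c (h1 n h hh)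
  · intro d u _ h1 n h hh
    exact h1 n h ((pow_dvd_pow f (by omega)).trans hh)
  · intro d u x _ h1 n h hh
    rw [map_mul, Module.End.mul_apply, hρ]
    refine h1 n _ ?_
    obtain ⟨g, rfl⟩ := hh
    rw [← add_assoc, Derivation.leibniz, Derivation.leibniz_pow]
    simp only [smul_eq_mul, Nat.add_sub_cancel]
    refine dvd_add (Dvd.dvd.mul_right (pow_dvd_pow f (by omega)) _) ?_
    refine Dvd.dvd.mul_left ?_ _
    exact dvd_smul_of_dvd _ (Dvd.intro _ rfl)

/-- The value of a symmetrized polynomial on a power of `f` is, up to a factorial, the value of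
the polynomial at the functional which is the derivative of `f` at `v`. -/
lemma eval_symz {ρ : U →ₐ[ℂ] Module.End ℂ (MvPolynomial (ι × ι) ℂ)}
    (hρ : ∀ x q, ρ (inc L x) q = matD b x q) {f : MvPolynomial (ι × ι) ℂ}
    {v : ι × ι → ℂ} {ℓ : ι → ℂ} (hf : eval v f = 0)
    (hℓ : ∀ i, eval v (matD b (b i) f) = ℓ i) {d : ℕ} {p : MvPolynomial ι ℂ}
    (hp : p.IsHomogeneous d) (g : MvPolynomial (ι × ι) ℂ) :
    eval v (ρ (symz b d p) (f ^ d * g)) = d.factorial * eval ℓ p * eval v g := by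
  induction d generalizing p g with
  | zero =>
    have h0 : p = C (coeff 0 p) := totalDegree_eq_zero_iff_eq_C.1
        (Nat.le_zero.1 (IsHomogeneous.totalDegree_le hp))
    rw [symz_zero, AlgHom.commutes, Module.algebraMap_end_apply, h0]
    simp
  | succ d ih =>
    have hz : ∀ i, eval v (ρ (symz b d (pderiv i p)) (f ^ (d + 1) * matD b (b i) g)) = 0 := by
      intro i
      obtain ⟨r, hr⟩ := dvd_of_mem_UF hρ f (symz_mem b d (pderiv i p)) 1
        (f ^ (d + 1) * matD b (b i) g) (by rw [add_comm]; exact Dvd.intro _ rfl)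
      rw [hr, map_mul, pow_one, hf, zero_mul]
    have h1 : ∀ i, eval v (ρ (symz b d (pderiv i p) * inc L (b i)) (f ^ (d + 1) * g)) =
        ((d : ℂ) + 1) * d.factorial * eval v g * (ℓ i * eval ℓ (pderiv i p)) := by
      intro i
      have h2 : matD b (b i) (f ^ (d + 1) * g) = f ^ (d + 1) * matD b (b i) g +
          f ^ d * (C ((d : ℂ) + 1) * g * matD b (b i) f) := by
        rw [Derivation.leibniz, Derivation.leibniz_pow]
        simp only [smul_eq_mul, Nat.add_sub_cancel, nsmul_eq_mul, map_add, map_one, map_natCast]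
        push_cast
        ring
      rw [map_mul ρ, Module.End.mul_apply, hρ, h2, map_add, map_add, hz, zero_add,
        ih (hp.pderiv) _]
      simp only [map_mul, eval_C, hℓ]
      ring
    rw [symz_succ, map_smul, LinearMap.smul_apply, smul_eval, map_sum, LinearMap.sum_apply,
      map_sum, Finset.sum_congr rfl fun i _ => h1 i, ← Finset.mul_sum]
    have h3 : ∑ i, ℓ i * eval ℓ (pderiv i p) = ((d : ℂ) + 1) * eval ℓ p := by
      have := congrArg (eval ℓ) hp.sum_X_mul_pderiv
      simpa using this
    rw [h3, Nat.factorial_succ]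
    have h5 : ((d : ℂ) + 1) ≠ 0 := by exact_mod_cast Nat.succ_ne_zero d
    push_cast
    field_simp

variable (b)

/-- Injectivity part of the Poincaré–Birkhoff–Witt theorem for Lie algebras with trivial
center. -/
theorem eq_zero_of_symz_mem (hL : ∀ x : L, (∀ y : L, ⁅x, y⁆ = 0) → x = 0) {d : ℕ}
    {p : MvPolynomial ι ℂ} (hp : p.IsHomogeneous d) (h : symz b d p ∈ UL L d) : p = 0 := by
  classical
  refine MvPolynomial.funext fun ℓ => ?_
  obtain ⟨f, hf, hℓ⟩ := exists_function b hL ℓ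
  obtain ⟨ρ, hρ⟩ := exists_matAction b
  have h1 := eval_symz hρ hf hℓ hp 1
  have h2 : eval (fun p => if p.1 = p.2 then 1 else 0) (ρ (symz b d p) (f ^ d * 1)) = 0 := by
    cases d with
    | zero => rw [(Submodule.mem_bot ℂ).1 h]; simp
    | succ d =>
      obtain ⟨r, hr⟩ := dvd_of_mem_UF hρ f h 1 (f ^ (d + 1) * 1)
        (by rw [add_comm, mul_one])
      rw [hr, map_mul, pow_one, hf, zero_mul]
  rw [h2, map_one, mul_one] at h1
  rw [map_zero]
  exact (mul_eq_zero.1 h1.symm).resolve_left (by exact_mod_cast Nat.factorial_ne_zero d)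

end Injectivity

end CenterUEA

/-! ### From invariants of the symmetric algebra to the center -/

namespace CenterUEA

open MvPolynomial

section Assembly

variable {L : Type*} [LieRing L] [LieAlgebra ℂ L] {ι : Type*} [Fintype ι] (b : Module.Basis ι ℂ L)

local notation "U" => UniversalEnvelopingAlgebra ℂ L

lemma mem_center_of_commute {z : U} (h : ∀ x : L, inc L x * z = z * inc L x) :
    z ∈ Subalgebra.center ℂ U := by
  rw [Subalgebra.mem_center_iff]
  intro u
  have hu : u ∈ Algebra.adjoin ℂ (Set.range (inc L)) := by rw [adjoin_inc]; trivial
  induction hu using Algebra.adjoin_induction with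
  | mem x hx => obtain ⟨y, rfl⟩ := hx; exact h y
  | algebraMap r => exact Algebra.commutes _ _
  | add x y _ _ hx hy => rw [add_mul, mul_add, hx, hy]
  | mul x y _ _ hx hy => rw [mul_assoc, hy, ← mul_assoc, hx, mul_assoc]

lemma inc_commutator_mem_UL (x : L) {d : ℕ} {u : U} (hu : u ∈ UL L d) :
    inc L x * u - u * inc L x ∈ UL L d := by
  cases d with
  | zero =>
    rw [(Submodule.mem_bot ℂ).1 hu, mul_zero, zero_mul, sub_zero]; exact zero_mem _
  | succ d => exact inc_commutator_mem x hu

lemma UF_le_UL {d e : ℕ} (h : d < e) : UF L d ≤ UL L e := by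
  cases e with
  | zero => omega
  | succ e => exact UF_mono (Nat.lt_succ_iff.1 h)

/-- The homogeneous polynomial `p` is the symbol of `u` in degree `d`. -/
def IsSymbol (d : ℕ) (p : MvPolynomial ι ℂ) (u : UniversalEnvelopingAlgebra ℂ L) : Prop :=
  p.IsHomogeneous d ∧ symz b d p - u ∈ UL L d

variable {b}

lemma IsSymbol.mem {d : ℕ} {p : MvPolynomial ι ℂ} {u : U} (h : IsSymbol b d p u) : u ∈ UF L d := by
  have := sub_mem (symz_mem b d p) (UL_le_UF d h.2)
  rwa [sub_sub_cancel] at this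

lemma isSymbol_C (a : ℂ) : IsSymbol b 0 (C a) (algebraMap ℂ U a) := by
  refine ⟨isHomogeneous_C _ _, ?_⟩
  rw [symz_zero, coeff_zero_C, sub_self]; exact zero_mem _

lemma IsSymbol.mul {d e : ℕ} {p q : MvPolynomial ι ℂ} {u v : U} (h1 : IsSymbol b d p u)
    (h2 : IsSymbol b e q v) : IsSymbol b (d + e) (p * q) (u * v) := by
  refine ⟨h1.1.mul h2.1, ?_⟩
  have : symz b (d + e) (p * q) - u * v = (symz b (d + e) (q * p) - symz b d p * symz b e q) +
      (symz b d p - u) * symz b e q + u * (symz b e q - v) := by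
    rw [mul_comm p q]; noncomm_ring
  rw [this]
  exact add_mem (add_mem (symz_mul b p h2.1) (mul_mem_UL_left h1.2 (symz_mem b e q)))
    (mul_mem_UL_right h1.mem h2.2)

lemma IsSymbol.pow {d : ℕ} {p : MvPolynomial ι ℂ} {u : U} (h1 : IsSymbol b d p u) (n : ℕ) :
    IsSymbol b (n * d) (p ^ n) (u ^ n) := by
  induction n with
  | zero => simpa using isSymbol_C (b := b) 1
  | succ n ih => rw [Nat.succ_mul, pow_succ, pow_succ]; exact ih.mul h1

variable {κ : Type*} {f : κ → MvPolynomial ι ℂ} {d : κ → ℕ}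
  {Φ : MvPolynomial κ ℂ →ₐ[ℂ] UniversalEnvelopingAlgebra ℂ L}

lemma isSymbol_monomial (hz : ∀ k, IsSymbol b (d k) (f k) (Φ (X k))) (s : κ →₀ ℕ) (a : ℂ) :
    IsSymbol b (Finsupp.weight d s) (aeval f (monomial s a)) (Φ (monomial s a)) := by
  have h1 : IsSymbol b (Finsupp.weight d s) (aeval f (monomial s (1 : ℂ))) (Φ (monomial s 1)) := by
    induction s using Finsupp.induction_linear with
    | zero => simpa using isSymbol_C (b := b) 1
    | add s t hs ht =>
      have : (monomial (s + t) 1 : MvPolynomial κ ℂ) = monomial s 1 * monomial t 1 := by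
        rw [monomial_mul, one_mul]
      rw [this, map_mul, map_mul, map_add]
      exact hs.mul ht
    | single k n =>
      have : (monomial (Finsupp.single k n) 1 : MvPolynomial κ ℂ) = X k ^ n := by rw [X_pow_eq_monomial]
      rw [this, map_pow, map_pow, aeval_X, Finsupp.weight_single, smul_eq_mul]
      exact (hz k).pow n
  have h2 : monomial s a = C a * monomial s 1 := by rw [C_mul_monomial, mul_one]
  have h3 := (isSymbol_C (b := b) a).mul h1
  rw [zero_add] at h3
  rw [h2, map_mul, map_mul, aeval_C, ← algebraMap_eq, AlgHom.commutes]
  exact h3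

lemma isSymbol_aeval (hz : ∀ k, IsSymbol b (d k) (f k) (Φ (X k))) {n : ℕ} {Q : MvPolynomial κ ℂ}
    (hQ : Q.IsWeightedHomogeneous d n) : IsSymbol b n (aeval f Q) (Φ Q) := by
  have h1 : ∀ s ∈ Q.support, IsSymbol b n (aeval f (monomial s (coeff s Q)))
      (Φ (monomial s (coeff s Q))) := by
    intro s hs
    have := isSymbol_monomial hz s (coeff s Q)
    rwa [hQ (mem_support_iff.1 hs)] at this
  have h2 : Φ Q = ∑ s ∈ Q.support, Φ (monomial s (coeff s Q)) := by
    conv_lhs => rw [Q.as_sum, map_sum]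
  constructor
  · rw [Q.as_sum, map_sum]
    exact IsHomogeneous.sum _ _ _ fun s hs => (h1 s hs).1
  · rw [h2]
    conv => enter [2, 1]; rw [Q.as_sum, map_sum, map_sum]
    rw [← Finset.sum_sub_distrib]
    exact sum_mem fun s hs => (h1 s hs).2

lemma aeval_mem_UL (hz : ∀ k, IsSymbol b (d k) (f k) (Φ (X k))) {n : ℕ} {Q : MvPolynomial κ ℂ}
    (hQ : ∀ s ∈ Q.support, Finsupp.weight d s < n) :
    Φ Q ∈ UL L n := by
  have h2 : Φ Q = ∑ s ∈ Q.support, Φ (monomial s (coeff s Q)) := by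
    conv_lhs => rw [Q.as_sum, map_sum]
  rw [h2]
  exact sum_mem fun s hs => UF_le_UL (hQ s hs) (isSymbol_monomial hz s _).mem

lemma aeval_center_injective (hL : ∀ x : L, (∀ y : L, ⁅x, y⁆ = 0) → x = 0)
    (hf : AlgebraicIndependent ℂ f) (hz : ∀ k, IsSymbol b (d k) (f k) (Φ (X k))) :
    Function.Injective Φ := by
  rw [injective_iff_map_eq_zero]
  have key : ∀ n (Q : MvPolynomial κ ℂ), (∀ s ∈ Q.support, Finsupp.weight d s < n) →
      Φ Q = 0 → Q = 0 := by
    intro n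
    induction n with
    | zero =>
      intro Q hQ _
      rw [← support_eq_empty, Finset.eq_empty_iff_forall_notMem]
      exact fun s hs => absurd (hQ s hs) (Nat.not_lt_zero _)
    | succ n ih =>
      intro Q hQ h0
      set R := weightedHomogeneousComponent d n Q with hR
      have hQR : ∀ s ∈ (Q - R).support, Finsupp.weight d s < n := by
        intro s hs
        rw [mem_support_iff, coeff_sub, hR, coeff_weightedHomogeneousComponent] at hs
        split_ifs at hs with hw
        · exact absurd (sub_self _) hs
        · rw [sub_zero] at hs
          have := hQ s (mem_support_iff.2 hs)
          omega
      have h1 := isSymbol_aeval hz (weightedHomogeneousComponent_isWeightedHomogeneous (w := d) n Q)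
      have h2 : symz b n (aeval f R) ∈ UL L n := by
        have h3 := aeval_mem_UL hz hQR
        rw [map_sub, h0, zero_sub] at h3
        have h4 := sub_mem h1.2 h3
        rw [← hR] at h4
        simpa using h4
      have h5 : R = 0 := by
        have := eq_zero_of_symz_mem b hL h1.1 h2
        exact (algebraicIndependent_iff.1 hf) _ this
      rw [h5, sub_zero] at hQR
      exact ih Q hQR h0
  intro Q hQ
  refine key (Q.support.sup (Finsupp.weight d) + 1) Q (fun s hs => ?_) hQ
  exact Nat.lt_succ_of_le (Finset.le_sup (f := Finsupp.weight d) hs)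

lemma aeval_center_surjective [Fintype κ] (hL : ∀ x : L, (∀ y : L, ⁅x, y⁆ = 0) → x = 0)
    (hinv : ∀ p : MvPolynomial ι ℂ, (∀ x, adS b x p = 0) → p ∈ Algebra.adjoin ℂ (Set.range f))
    (hc : ∀ Q, Φ Q ∈ Subalgebra.center ℂ U) (hz : ∀ k, IsSymbol b (d k) (f k) (Φ (X k))) :
    ∀ c ∈ Subalgebra.center ℂ U, ∃ Q, Φ Q = c := by
  have key : ∀ n, ∀ c ∈ Subalgebra.center ℂ U, c ∈ UL L n → ∃ Q, Φ Q = c := by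
    intro n
    induction n with
    | zero =>
      intro c hcc hcn
      exact ⟨0, by rw [map_zero]; exact ((Submodule.mem_bot ℂ).1 hcn).symm⟩
    | succ n ih =>
      intro c hcc hcn
      obtain ⟨p, hp, hcp⟩ := exists_symz b (show c ∈ UF L n from hcn)
      have hpinv : ∀ x, adS b x p = 0 := by
        intro x
        refine eq_zero_of_symz_mem b hL (adS_isHomogeneous b x hp) ?_
        have h1 := inc_commutator_mem_UL x hcp
        have h2 := (Subalgebra.mem_center_iff.1 hcc) (inc L x)
        have h3 : symz b n (adS b x p) =
            -(inc L x * (c - symz b n p) - (c - symz b n p) * inc L x) := by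
          rw [symz_adS, mul_sub, sub_mul, h2]; abel
        rw [h3]
        exact neg_mem h1
      have hmem := hinv p hpinv
      rw [Algebra.adjoin_range_eq_range_aeval] at hmem
      obtain ⟨Q, hQ⟩ := hmem
      set R := weightedHomogeneousComponent d n Q with hR
      have h1 := isSymbol_aeval hz (weightedHomogeneousComponent_isWeightedHomogeneous (w := d) n Q)
      have h2 : aeval f R = p := by
        rw [hR, ← homogeneousComponent_aeval (fun k => (hz k).1)]
        refine Eq.trans (congrArg _ hQ) (homogeneousComponent_eq_self hp)
      obtain ⟨Q', hQ'⟩ := ih (c - Φ R) (sub_mem hcc (hc R)) (by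
        have h3 := add_mem hcp h1.2
        rwa [← hR, h2, sub_add_sub_cancel] at h3)
      exact ⟨Q' + R, by rw [map_add, hQ', sub_add_cancel]⟩
  intro c hcc
  obtain ⟨n, hn⟩ := exists_mem_UF c
  exact key (n + 1) c hcc hn

/-- If the invariants of the symmetric algebra of `L` are a polynomial ring on homogeneous
generators, then so is the center of `U(L)`. -/
theorem center_equiv_of_invariants [Fintype κ] (hL : ∀ x : L, (∀ y : L, ⁅x, y⁆ = 0) → x = 0)
    (hfd : ∀ k, (f k).IsHomogeneous (d k)) (hfi : ∀ k x, adS b x (f k) = 0)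
    (hf : AlgebraicIndependent ℂ f)
    (hinv : ∀ p : MvPolynomial ι ℂ, (∀ x, adS b x p = 0) → p ∈ Algebra.adjoin ℂ (Set.range f)) :
    Nonempty (Subalgebra.center ℂ U ≃ₐ[ℂ] MvPolynomial κ ℂ) := by
  let z : κ → Subalgebra.center ℂ U := fun k => ⟨symz b (d k) (f k), mem_center_of_commute fun x => by
    have := symz_adS b x (d k) (f k)
    rw [hfi, map_zero] at this
    exact (sub_eq_zero.1 this.symm)⟩
  let Φ : MvPolynomial κ ℂ →ₐ[ℂ] U := (Subalgebra.val _).comp (aeval z)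
  have hΦ : ∀ Q, Φ Q = (aeval z Q : Subalgebra.center ℂ U) := fun Q => rfl
  have hz : ∀ k, IsSymbol b (d k) (f k) (Φ (X k)) := fun k =>
    ⟨hfd k, by rw [hΦ, aeval_X, sub_self]; exact zero_mem _⟩
  have hc : ∀ Q, Φ Q ∈ Subalgebra.center ℂ U := fun Q => (aeval z Q).2
  refine ⟨(AlgEquiv.ofBijective (aeval z) ⟨fun p q hpq => ?_, fun c => ?_⟩).symm⟩
  · exact aeval_center_injective hL hf hz (congrArg Subtype.val hpq)
  · obtain ⟨Q, hQ⟩ := aeval_center_surjective hL hinv hc hz c c.2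
    exact ⟨Q, Subtype.ext hQ⟩

end Assembly

end CenterUEA

/-! ### The Weyl group and restriction to the Cartan subalgebra -/

namespace CenterUEA

open MvPolynomial

section Components

/-- Degree-preserving linear maps commute with taking homogeneous components. -/
lemma map_homogeneousComponent {σ τ : Type*} (φ : MvPolynomial σ ℂ →ₗ[ℂ] MvPolynomial τ ℂ)
    (hφ : ∀ n p, p.IsHomogeneous n → (φ p).IsHomogeneous n) (n : ℕ) (p : MvPolynomial σ ℂ) :
    φ (homogeneousComponent n p) = homogeneousComponent n (φ p) := by
  have h1 : ∀ m, homogeneousComponent n (φ (homogeneousComponent m p)) =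
      if m = n then φ (homogeneousComponent m p) else 0 := by
    intro m
    rw [homogeneousComponent_of_mem (hφ m _ (homogeneousComponent_isHomogeneous m p))]
    simp only [eq_comm]
  conv_rhs => rw [← sum_homogeneousComponent p, map_sum, map_sum]
  simp only [h1, Finset.sum_ite_eq', Finset.mem_range]
  split_ifs with h
  · rfl
  · rw [homogeneousComponent_eq_zero _ _ (by omega), map_zero]

variable {κ Φ : Type*}

lemma coeff_coeff_sumAlgEquiv (p : MvPolynomial (Φ ⊕ κ) ℂ) (t : Φ →₀ ℕ) (s : κ →₀ ℕ) :
    coeff s (coeff t (sumAlgEquiv ℂ Φ κ p)) =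
      coeff (Finsupp.sumFinsuppEquivProdFinsupp.symm (t, s)) p := by
  simp [sumAlgEquiv, coeff, AddMonoidAlgebra.curryAlgEquiv, AddMonoidAlgebra.curryRingEquiv,
    AddMonoidAlgebra.curryAddEquiv]

/-- A polynomial vanishing to order `n + 1` along the Cartan subalgebra has no component in total
degree `n`. -/
lemma homogeneousComponent_of_ord {n : ℕ} {p : MvPolynomial (Φ ⊕ κ) ℂ}
    (hp : Ord (n + 1) (sumAlgEquiv ℂ Φ κ p)) : homogeneousComponent n p = 0 := by
  ext m
  rw [coeff_homogeneousComponent, coeff_zero]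
  split_ifs with h
  · obtain ⟨⟨t, s⟩, rfl⟩ := Finsupp.sumFinsuppEquivProdFinsupp.symm.surjective m
    rw [← coeff_coeff_sumAlgEquiv, hp t, coeff_zero]
    have : (Finsupp.sumFinsuppEquivProdFinsupp.symm (t, s)).degree = t.degree + s.degree := by
      have e : Finsupp.sumFinsuppEquivProdFinsupp.symm (t, s) =
          t.mapDomain Sum.inl + s.mapDomain Sum.inr := by
        ext (i | i)
        · rw [Finsupp.add_apply, Finsupp.mapDomain_apply Sum.inl_injective,
            Finsupp.mapDomain_of_notMem_range _ _ (by simp)]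
          simp
        · rw [Finsupp.add_apply, Finsupp.mapDomain_apply Sum.inr_injective,
            Finsupp.mapDomain_of_notMem_range _ _ (by simp)]
          simp
      rw [e, map_add, Finsupp.degree_mapDomain, Finsupp.degree_mapDomain]
    omega
  · rfl

/-- Restriction to the Cartan subalgebra: the root vectors are sent to zero. -/
noncomputable def restr (Φ κ : Type*) : MvPolynomial (Φ ⊕ κ) ℂ →ₐ[ℂ] MvPolynomial κ ℂ :=
  aeval (Sum.elim (fun _ => 0) X)

lemma restr_apply (p : MvPolynomial (Φ ⊕ κ) ℂ) :
    restr Φ κ p = coeff 0 (sumAlgEquiv ℂ Φ κ p) := by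
  induction p using MvPolynomial.induction_on with
  | C a => simp [restr]
  | add p q hp hq => simp only [map_add, hp, hq, coeff_add]
  | mul_X p i hp =>
    simp only [← constantCoeff_eq] at hp ⊢
    rw [map_mul, map_mul, map_mul, hp]
    cases i <;> simp [restr]

lemma restr_isHomogeneous {n : ℕ} {p : MvPolynomial (Φ ⊕ κ) ℂ} (hp : p.IsHomogeneous n) :
    (restr Φ κ p).IsHomogeneous n := by
  have := hp.aeval (n := 1) (Sum.elim (fun _ => 0) (X (R := ℂ) (σ := κ))) (by
    rintro (i | i)
    · exact isHomogeneous_zero _ _ _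
    · exact isHomogeneous_X _ _)
  rwa [one_mul] at this

end Components

section WeylGroup

variable {κ Φ : Type*} [Fintype κ] (rd : RootDatum κ Φ)

/-- A reflection as an algebra automorphism. -/
noncomputable def reflEquiv (β : Φ) : MvPolynomial κ ℂ ≃ₐ[ℂ] MvPolynomial κ ℂ :=
  AlgEquiv.ofAlgHom (refl (rd.rt β) (rd.hv β)) (refl (rd.rt β) (rd.hv β))
    (AlgHom.ext fun q => refl_refl (rd.rt_hv β) q) (AlgHom.ext fun q => refl_refl (rd.rt_hv β) q)

lemma reflEquiv_apply (β : Φ) (q : MvPolynomial κ ℂ) :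
    reflEquiv rd β q = refl (rd.rt β) (rd.hv β) q := rfl

/-- The Weyl group, acting on the symmetric algebra of the Cartan subalgebra. -/
noncomputable def weyl : Subgroup (MvPolynomial κ ℂ ≃ₐ[ℂ] MvPolynomial κ ℂ) :=
  Subgroup.closure (Set.range (reflEquiv rd))

lemma refl_isHomogeneous (a v : κ → ℂ) {n : ℕ} {p : MvPolynomial κ ℂ} (hp : p.IsHomogeneous n) :
    (refl a v p).IsHomogeneous n := by
  have := hp.aeval (n := 1) (fun i => X i - C (a i) * lin v) (fun i =>
    (isHomogeneous_X _ _).sub (by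
      simpa using (isHomogeneous_C κ (a i)).mul (lin_isHomogeneous v)))
  rwa [one_mul] at this

lemma reflEquiv_mul_self (β : Φ) : reflEquiv rd β * reflEquiv rd β = 1 :=
  AlgEquiv.ext fun q => refl_refl (rd.rt_hv β) q

lemma weyl_induction {P : (MvPolynomial κ ℂ ≃ₐ[ℂ] MvPolynomial κ ℂ) → Prop} (h1 : P 1)
    (hm : ∀ β g, P g → P (reflEquiv rd β * g)) {g : MvPolynomial κ ℂ ≃ₐ[ℂ] MvPolynomial κ ℂ}
    (hg : g ∈ weyl rd) : P g := by
  induction hg using Subgroup.closure_induction_left with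
  | one => exact h1
  | mul_left x hx y _ hy =>
    obtain ⟨β, rfl⟩ := hx
    exact hm β y hy
  | inv_mul_cancel x hx y _ hy =>
    obtain ⟨β, rfl⟩ := hx
    rw [inv_eq_of_mul_eq_one_right (reflEquiv_mul_self rd β)]
    exact hm β y hy

lemma weyl_graded : GradedAction (weyl rd) := by
  intro g hg n p hp
  revert p
  refine weyl_induction rd (P := fun g => ∀ p, p.IsHomogeneous n → (g p).IsHomogeneous n)
    (fun p hp => hp) (fun β g ih p hp => ?_) hg
  exact refl_isHomogeneous _ _ (ih p hp)

lemma weyl_reflGen [Fintype Φ] [DecidableEq Φ] : ReflGen (weyl rd) := by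
  refine ⟨_, rfl, ?_⟩
  rintro _ ⟨β, rfl⟩
  exact ⟨lin (rd.hv β), lin_ne_zero (rd.hv_ne_zero β), lin_isHomogeneous _,
    fun p => lin_dvd_refl_sub _ _ _⟩

lemma mem_invs_weyl {p : MvPolynomial κ ℂ} :
    p ∈ invs (weyl rd) ↔ ∀ β, refl (rd.rt β) (rd.hv β) p = p := by
  refine ⟨fun h β => h _ (Subgroup.subset_closure ⟨β, rfl⟩), fun h g hg => ?_⟩
  refine weyl_induction rd (P := fun g => g p = p) rfl (fun β g ih => ?_) hg
  change reflEquiv rd β (g p) = p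
  rw [ih]; exact h β

/-- The Weyl group permutes the coroots. If these span, it is therefore finite. -/
lemma weyl_finite [Finite Φ] (hperm : ∀ β γ, ∃ δ,
      rd.hv γ - (∑ i, rd.rt β i * rd.hv γ i) • rd.hv β = rd.hv δ)
    (hspan : ⊤ ≤ Submodule.span ℂ (Set.range rd.hv)) : Finite (weyl rd) := by
  have h1 : ∀ g : weyl rd, ∀ γ, ∃ δ, g.1 (lin (rd.hv γ)) = lin (rd.hv δ) := by
    rintro ⟨g, hg⟩
    refine weyl_induction rd (P := fun g => ∀ γ, ∃ δ, g (lin (rd.hv γ)) = lin (rd.hv δ))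
      (fun γ => ⟨γ, rfl⟩) (fun β g ih γ => ?_) hg
    obtain ⟨δ, hδ⟩ := ih γ
    obtain ⟨ε, hε⟩ := hperm β δ
    refine ⟨ε, ?_⟩
    change reflEquiv rd β (g _) = _
    rw [hδ, reflEquiv_apply, refl_lin, ← hε]
    simp only [lin, Pi.sub_apply, Pi.smul_apply, smul_eq_mul, map_sub, map_mul, sub_mul,
      Finset.sum_sub_distrib, Finset.mul_sum, mul_assoc]
  choose σ hσ using h1
  refine Finite.of_injective σ fun g g' h => ?_
  have h2 : ∀ v : κ → ℂ, g.1 (lin v) = g'.1 (lin v) := by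
    intro v
    have hv : v ∈ Submodule.span ℂ (Set.range rd.hv) := hspan trivial
    have lin_add : ∀ v w : κ → ℂ, lin (v + w) = lin v + lin w := fun v w => by
      simp [lin, add_mul, Finset.sum_add_distrib]
    have lin_smul : ∀ (c : ℂ) (w : κ → ℂ), lin (c • w) = c • lin w := fun c w => by
      simp [lin, Finset.smul_sum, smul_eq_C_mul, mul_assoc]
    induction hv using Submodule.span_induction with
    | mem x hx => obtain ⟨γ, rfl⟩ := hx; rw [hσ, hσ, h]
    | zero => simp [lin]
    | add x y _ _ hx hy => rw [lin_add, map_add, map_add, hx, hy]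
    | smul c x _ hx => rw [lin_smul, map_smul, map_smul, hx]
  classical
  refine Subtype.ext (AlgEquiv.coe_toAlgHom_injective (algHom_ext fun i => ?_))
  have h3 : lin (Pi.single i (1 : ℂ)) = X i := by
    simp [lin, Pi.single_apply]
  have := h2 (Pi.single i 1)
  rwa [h3] at this

end WeylGroup

end CenterUEA

/-! ### Lie algebras with a root basis -/

namespace CenterUEA

open MvPolynomial

section LinearForms

variable {L : Type*} [LieRing L] [LieAlgebra ℂ L] {ι : Type*} [Fintype ι] (b : Module.Basis ι ℂ L)

/-- The inclusion of `L` in its symmetric algebra. -/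
noncomputable def linS : L →ₗ[ℂ] MvPolynomial ι ℂ := b.constr ℂ (fun i => X i)

@[simp] lemma linS_basis (i : ι) : linS b (b i) = X i := b.constr_basis ℂ _ i

lemma adS_X_eq (x : L) (i : ι) : adS b x (X i) = linS b ⁅x, b i⁆ := by
  conv_rhs => rw [← b.sum_repr ⁅x, b i⁆, map_sum]
  simp only [adS_X, map_smul, linS_basis, smul_eq_C_mul]

lemma adS_linS (x y : L) : adS b x (linS b y) = linS b ⁅x, y⁆ := by
  conv_rhs => rw [← b.sum_repr y, lie_sum, map_sum]
  conv_lhs => rw [← b.sum_repr y, map_sum, map_sum]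
  simp only [map_smul, linS_basis, Derivation.map_smul, adS_X_eq, lie_smul]

lemma adS_lie (x y : L) (p : MvPolynomial ι ℂ) :
    adS b ⁅x, y⁆ p = adS b x (adS b y p) - adS b y (adS b x p) := by
  have : adS b ⁅x, y⁆ = ⁅adS b x, adS b y⁆ := by
    refine derivation_ext fun i => ?_
    rw [Derivation.commutator_apply, adS_X_eq, adS_X_eq, adS_X_eq, adS_linS, adS_linS, lie_lie,
      map_sub]
  rw [this, Derivation.commutator_apply]

/-- `adS` as a linear map in the acting element. -/
noncomputable def adSL : L →ₗ[ℂ] Derivation ℂ (MvPolynomial ι ℂ) (MvPolynomial ι ℂ) where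
  toFun := adS b
  map_add' x y := derivation_ext fun i => by
    rw [Derivation.add_apply, adS_X_eq, adS_X_eq, adS_X_eq, add_lie, map_add]
  map_smul' c x := derivation_ext fun i => by
    rw [RingHom.id_apply, Derivation.smul_apply, adS_X_eq, adS_X_eq, smul_lie, map_smul]

lemma adS_eq_sum (x : L) (p : MvPolynomial ι ℂ) :
    adS b x p = ∑ i, b.repr x i • adS b (b i) p := by
  let ev : L →ₗ[ℂ] MvPolynomial ι ℂ :=
    { toFun := fun x => adS b x p
      map_add' := fun x y => congrArg (fun D => D p) ((adSL b).map_add x y)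
      map_smul' := fun c x => congrArg (fun D => D p) ((adSL b).map_smul c x) }
  change ev x = ∑ i, b.repr x i • ev (b i)
  conv_lhs => rw [← b.sum_repr x, map_sum]
  simp only [map_smul]

lemma adS_homogeneousComponent (x : L) (n : ℕ) (p : MvPolynomial ι ℂ) :
    adS b x (homogeneousComponent n p) = homogeneousComponent n (adS b x p) :=
  map_homogeneousComponent (adS b x).toLinearMap (fun _ _ hp => adS_isHomogeneous b x hp) n p

end LinearForms

section Transport

variable {L : Type*} [LieRing L] [LieAlgebra ℂ L] {κ Φ : Type*} [Fintype κ] [Fintype Φ]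
  [DecidableEq Φ]

/-- The basis `b` consists of root vectors (indexed by `Φ`) and of a basis (indexed by `κ`) of the
Cartan subalgebra, with the bracket relations prescribed by the root datum. -/
structure IsRootBasis (rd : RootDatum κ Φ) (b : Module.Basis (Φ ⊕ κ) ℂ L) : Prop where
  cartan_cartan : ∀ i j, ⁅b (.inr i), b (.inr j)⁆ = 0
  cartan_root : ∀ i γ, ⁅b (.inr i), b (.inl γ)⁆ = rd.rt γ i • b (.inl γ)
  root_neg : ∀ β, ∃ c : ℂ, c ≠ 0 ∧
    ⁅b (.inl β), b (.inl (rd.neg β))⁆ = c • ∑ i, rd.hv β i • b (.inr i)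
  root_root : ∀ β γ, γ ≠ rd.neg β → ∃ N : Φ → ℂ,
    ⁅b (.inl β), b (.inl γ)⁆ = ∑ δ, N δ • b (.inl δ) ∧ N β = 0 ∧ N (rd.neg β) = 0

/-- Transport of a derivation along an isomorphism of algebras. -/
noncomputable def transport {A B : Type*} [CommRing A] [CommRing B] [Algebra ℂ A] [Algebra ℂ B]
    (θ : A ≃ₐ[ℂ] B) (D : Derivation ℂ A A) : Derivation ℂ B B :=
  Derivation.mk' (θ.toLinearMap ∘ₗ D.toLinearMap ∘ₗ θ.symm.toLinearMap) fun x y => by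
    simp [Derivation.leibniz]

lemma transport_apply {A B : Type*} [CommRing A] [CommRing B] [Algebra ℂ A] [Algebra ℂ B]
    (θ : A ≃ₐ[ℂ] B) (D : Derivation ℂ A A) (x : B) : transport θ D x = θ (D (θ.symm x)) := rfl

variable {rd : RootDatum κ Φ} {b : Module.Basis (Φ ⊕ κ) ℂ L}

lemma IsRootBasis.exists_action (hb : IsRootBasis rd b) : ∃ A : RootAction rd,
    (∀ β, A.D β = transport (sumAlgEquiv ℂ Φ κ) (adS b (b (.inl β)))) ∧
    ∀ i, A.E i = transport (sumAlgEquiv ℂ Φ κ) (adS b (b (.inr i))) := by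
  have h1 := hb.root_neg
  have h2 := hb.root_root
  choose c hc0 hc using h1
  choose! N hN hN1 hN2 using h2
  have hCC : ∀ D : Derivation ℂ (MvPolynomial Φ (MvPolynomial κ ℂ)) (MvPolynomial Φ (MvPolynomial κ ℂ)),
      ∀ a : ℂ, D (C (C a)) = 0 := fun D a => D.map_algebraMap a
  have hroot : ∀ β i, ⁅b (.inl β), b (.inr i)⁆ = -(rd.rt β i • b (.inl β)) := fun β i => by
    rw [← lie_skew, hb.cartan_root]
  refine ⟨{
    D := fun β => transport (sumAlgEquiv ℂ Φ κ) (adS b (b (.inl β)))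
    E := fun i => transport (sumAlgEquiv ℂ Φ κ) (adS b (b (.inr i)))
    cst := c
    cst_ne := hc0
    N := N
    D_C := fun β r => ?_
    D_X_neg := fun β => ?_
    D_X := fun β γ h => ?_
    N_self := hN1
    N_neg := hN2
    E_C := fun i r => ?_
    E_X := fun i γ => ?_
    E_D := fun i β F => ?_
    D_D := fun β γ => ?_ }, fun _ => rfl, fun _ => rfl⟩
  · induction r using MvPolynomial.induction_on with
    | C a => rw [hCC]; simp
    | add p q hp hq => simp only [map_add, hp, hq, mul_add, neg_add]
    | mul_X p i hp =>
      rw [C_mul, Derivation.leibniz, hp, transport_apply, sumAlgEquiv_symm_C_X, adS_X_eq, hroot,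
        map_neg, map_smul, linS_basis, Derivation.leibniz, dirD_X, map_neg, map_smul,
        sumAlgEquiv_X_inl]
      have h3 : rd.rt β i • (X β : MvPolynomial Φ (MvPolynomial κ ℂ)) = C (C (rd.rt β i)) * X β :=
        Algebra.smul_def _ _
      simp only [h3, smul_eq_mul, C_add, C_mul]
      ring
  · rw [transport_apply, sumAlgEquiv_symm_X, adS_X_eq, hc]
    simp [lin, smul_eq_C_mul]
  · rw [transport_apply, sumAlgEquiv_symm_X, adS_X_eq, hN β γ h]
    simp [smul_eq_C_mul]
  · induction r using MvPolynomial.induction_on with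
    | C a => exact hCC _ a
    | add p q hp hq => rw [C_add, map_add, hp, hq, add_zero]
    | mul_X p j hp =>
      rw [C_mul, Derivation.leibniz, hp, transport_apply, sumAlgEquiv_symm_C_X, adS_X_eq,
        hb.cartan_cartan]
      simp
  · rw [transport_apply, sumAlgEquiv_symm_X, adS_X_eq, hb.cartan_root]
    simp [smul_eq_C_mul]
  · simp only [transport_apply, AlgEquiv.symm_apply_apply]
    have := adS_lie b (b (.inr i)) (b (.inl β)) ((sumAlgEquiv ℂ Φ κ).symm F)
    rw [hb.cartan_root] at this
    have h3 : adS b (rd.rt β i • b (.inl β)) = rd.rt β i • adS b (b (.inl β)) :=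
      (adSL b).map_smul _ _
    rw [h3, Derivation.smul_apply, eq_sub_iff_add_eq, add_comm] at this
    rw [← this, map_add, map_smul]
  · refine ⟨fun δ => b.repr ⁅b (.inl β), b (.inl γ)⁆ (.inl δ),
      fun i => b.repr ⁅b (.inl β), b (.inl γ)⁆ (.inr i), fun F => ?_⟩
    simp only [transport_apply, AlgEquiv.symm_apply_apply]
    rw [← map_sub, ← adS_lie, adS_eq_sum, Fintype.sum_sum_type]
    simp only [map_add, map_sum, map_smul]

/-- Chevalley's restriction theorem, combined with the theorem on invariants of finite reflection
groups: the center of `U(L)` is a polynomial ring. -/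
theorem IsRootBasis.center_equiv (hb : IsRootBasis rd b)
    (hL : ∀ x : L, (∀ y : L, ⁅x, y⁆ = 0) → x = 0) (hW : Finite (weyl rd)) :
    Nonempty (Subalgebra.center ℂ (UniversalEnvelopingAlgebra ℂ L) ≃ₐ[ℂ] MvPolynomial κ ℂ) := by
  classical
  obtain ⟨A, hAD, hAE⟩ := hb.exists_action
  have := Fintype.ofFinite (weyl rd)
  obtain ⟨g, d, hgd, -, hg, hgW⟩ := chevalley (weyl_graded rd) (weyl_reflGen rd)
  have hgW' : ∀ k β, refl (rd.rt β) (rd.hv β) (g k) = g k := fun k =>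
    (mem_invs_weyl rd).1 (hgW ▸ Algebra.subset_adjoin ⟨k, rfl⟩)
  -- homogeneous invariant lifts of the generators
  have hlift : ∀ k, ∃ f : MvPolynomial (Φ ⊕ κ) ℂ, f.IsHomogeneous (d k) ∧
      (∀ x, adS b x f = 0) ∧ restr Φ κ f = g k := by
    intro k
    obtain ⟨F, hF0, hFE, hFD⟩ := A.res_surj (hgW' k) (d k + 1)
    refine ⟨homogeneousComponent (d k) ((sumAlgEquiv ℂ Φ κ).symm F),
      homogeneousComponent_isHomogeneous _ _, fun x => ?_, ?_⟩
    · rw [adS_eq_sum]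
      refine Finset.sum_eq_zero fun i _ => ?_
      rw [adS_homogeneousComponent]
      obtain β | i := i
      · rw [homogeneousComponent_of_ord, smul_zero]
        have := hFD β
        rwa [hAD, transport_apply] at this
      · have := hFE i
        rw [hAE, transport_apply, EmbeddingLike.map_eq_zero_iff] at this
        rw [this, map_zero, smul_zero]
    · rw [← AlgHom.toLinearMap_apply, map_homogeneousComponent _
        (fun n p hp => restr_isHomogeneous hp), AlgHom.toLinearMap_apply, restr_apply,
        AlgEquiv.apply_symm_apply, hF0]
      exact homogeneousComponent_eq_self (hgd k)
  choose f hfd hfi hfg using hlift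
  have hres : ∀ Q, restr Φ κ (aeval f Q) = aeval g Q := fun Q => by
    rw [← AlgHom.comp_apply, comp_aeval]
    simp only [hfg]
  have hD : ∀ p : MvPolynomial (Φ ⊕ κ) ℂ, (∀ x, adS b x p = 0) →
      ∀ β, A.D β (sumAlgEquiv ℂ Φ κ p) = 0 := fun p hp β => by
    rw [hAD, transport_apply, AlgEquiv.symm_apply_apply, hp, map_zero]
  refine center_equiv_of_invariants hL hfd hfi ?_ fun p hp => ?_
  · refine AlgebraicIndependent.of_comp (restr Φ κ) ?_
    have : restr Φ κ ∘ f = g := funext hfg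
    rwa [this]
  · have h1 : restr Φ κ p ∈ invs (weyl rd) := by
      rw [mem_invs_weyl, restr_apply]
      exact A.res_inv (hD p hp)
    rw [hgW, Algebra.adjoin_range_eq_range_aeval] at h1
    obtain ⟨Q, hQ⟩ := h1
    have hQi : ∀ x, adS b x (aeval f Q) = 0 := fun x => by
      rw [derivation_aeval]
      simp [hfi]
    have h2 : sumAlgEquiv ℂ Φ κ (p - aeval f Q) = 0 := by
      refine A.res_inj (hD _ fun x => ?_) ?_
      · rw [map_sub, hp, hQi, sub_zero]
      · rw [← restr_apply, map_sub, hres, ← hQ]; exact sub_self _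
    rw [EmbeddingLike.map_eq_zero_iff, sub_eq_zero] at h2
    rw [h2, Algebra.adjoin_range_eq_range_aeval]
    exact ⟨Q, rfl⟩

end Transport

end CenterUEA

/-! ### The root basis of a semisimple Lie algebra -/

namespace CenterUEA

open LieAlgebra LieAlgebra.IsKilling LieModule

section LieData

variable {L : Type*} [LieRing L] [LieAlgebra ℂ L] [Module.Finite ℂ L] [LieAlgebra.IsKilling ℂ L]
  {H : LieSubalgebra ℂ L} [H.IsCartanSubalgebra]
  {κ : Type*} [Fintype κ] (hb : Module.Basis κ ℂ H)

lemma root_expand (α : Weight ℂ H L) (h : H) :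
    ∑ i, α (hb i) * hb.repr h i = α h := by
  conv_rhs => rw [← hb.sum_repr h]
  change _ = Weight.toLinear ℂ H L α (∑ i, hb.repr h i • hb i)
  rw [map_sum]
  refine Finset.sum_congr rfl fun i _ => ?_
  rw [map_smul, smul_eq_mul, mul_comm]; rfl

/-- The negative of a root. -/
noncomputable def negRoot (α : H.root) : H.root :=
  ⟨-α.1, by
    have := H.isNonZero_coe_root α
    simpa using this⟩

/-- The roots and coroots of a Killing Lie algebra, in coordinates with respect to a basis of the
Cartan subalgebra. -/
noncomputable def lieRootDatum : RootDatum κ H.root where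
  rt α i := α.1 (hb i)
  hv α i := hb.repr (coroot α.1) i
  neg := negRoot
  neg_neg α := Subtype.ext (neg_neg α.1)
  rt_neg α := by ext i; simp [negRoot]
  hv_neg α := by ext i; simp [negRoot]
  rt_hv α := by rw [root_expand, root_apply_coroot (H.isNonZero_coe_root α)]
  indep β γ h1 h2 t ht := by
    have hn : (rootSystem H).flip.root γ ≠ -(rootSystem H).flip.root β := by
      intro h
      apply h2
      have h' : coroot γ.1 = coroot (-β.1) := by
        rw [coroot_neg]; exact h
      exact Subtype.ext ((coroot_eq_iff _ _).1 h')
    have hli := RootPairing.IsReduced.linearIndependent (rootSystem H).flip h1 hn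
    rw [LinearIndependent.pair_iff] at hli
    have h3 : coroot γ.1 = t • coroot β.1 := by
      apply hb.repr.injective
      ext i
      rw [map_smul]
      exact congrFun ht i
    have := hli 1 (-t) (by
      change (1 : ℂ) • coroot γ.1 + (-t) • coroot β.1 = 0
      rw [h3]; simp)
    exact one_ne_zero this.1

/-- Generators of the root lines together with a basis of the Cartan subalgebra form a basis. -/
lemma exists_root_basis : ∃ b : Module.Basis (H.root ⊕ κ) ℂ L,
    (∀ α : H.root, b (.inl α) ∈ rootSpace H α.1) ∧ ∀ i, b (.inr i) = hb i := by
  classical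
  choose e he he0 using fun α : H.root => α.1.exists_ne_zero
  have hspan1 : ∀ (α : H.root), ∀ x ∈ rootSpace H α.1, x ∈ Submodule.span ℂ {e α} := by
    intro α x hx
    have h1 := finrank_rootSpace_eq_one α.1 (H.isNonZero_coe_root α)
    obtain ⟨c, hc⟩ := (finrank_eq_one_iff_of_nonzero' (⟨e α, he α⟩ : rootSpace H α.1)
      (fun h => he0 α (congrArg Subtype.val h))).1 h1 ⟨x, hx⟩
    exact Submodule.mem_span_singleton.2 ⟨c, congrArg Subtype.val hc⟩
  have hind := LieSubmodule.iSupIndep_toSubmodule.mpr (iSupIndep_genWeightSpace ℂ H L)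
  have hinj : Function.Injective fun α : H.root => (α.1 : H → ℂ) := fun α β h =>
    Subtype.ext (DFunLike.coe_injective h)
  have li1 : LinearIndependent ℂ e :=
    (hind.comp hinj).linearIndependent _ he he0
  have li2 : LinearIndependent ℂ (fun i => (hb i : L)) :=
    hb.linearIndependent.map' H.toSubmodule.subtype (Submodule.ker_subtype _)
  have hHspan : Submodule.span ℂ (Set.range fun i => (hb i : L)) = H.toSubmodule := by
    have := congrArg (Submodule.map H.toSubmodule.subtype) hb.span_eq
    rw [Submodule.map_span, ← Set.range_comp, Submodule.map_top, Submodule.range_subtype] at this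
    exact this
  have hzero : (rootSpace H (0 : H → ℂ)).toSubmodule = H.toSubmodule := by
    rw [rootSpace_zero_eq]; rfl
  have hdis : Disjoint (Submodule.span ℂ (Set.range e))
      (Submodule.span ℂ (Set.range fun i => (hb i : L))) := by
    rw [hHspan, ← hzero]
    refine ((hind (0 : H → ℂ)).symm).mono_left ?_
    rw [Submodule.span_le]
    rintro _ ⟨α, rfl⟩
    refine Submodule.mem_iSup_of_mem (α.1 : H → ℂ) (Submodule.mem_iSup_of_mem ?_ (he α))
    exact H.isNonZero_coe_root α
  have li := li1.sum_type li2 hdis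
  have hsp : ⊤ ≤ Submodule.span ℂ (Set.range (Sum.elim e fun i => (hb i : L))) := by
    rw [← LieSubmodule.iSup_toSubmodule_eq_top.mpr (iSup_genWeightSpace_eq_top' ℂ H L)]
    refine iSup_le fun α => ?_
    rw [Set.Sum.elim_range, Submodule.span_union]
    by_cases hα : α.IsZero
    · refine le_trans ?_ le_sup_right
      rw [hHspan, ← hzero, ← hα.eq]
    · refine le_trans ?_ le_sup_left
      intro x hx
      have := hspan1 ⟨α, by simpa using hα⟩ x hx
      exact Submodule.span_mono (by simp) this
  refine ⟨Module.Basis.mk li hsp, fun α => ?_, fun i => ?_⟩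
  · rw [Module.Basis.mk_apply]; exact he α
  · rw [Module.Basis.mk_apply]; rfl

lemma isRootBasis {b : Module.Basis (H.root ⊕ κ) ℂ L}
    (h1 : ∀ α : H.root, b (.inl α) ∈ rootSpace H α.1) (h2 : ∀ i, b (.inr i) = hb i) :
    IsRootBasis (lieRootDatum hb) b := by
  classical
  have hline : ∀ (α : H.root), ∀ x ∈ rootSpace H α.1, ∃ c : ℂ, c • b (.inl α) = x := by
    intro α x hx
    obtain ⟨c, hc⟩ := (finrank_eq_one_iff_of_nonzero' (⟨b (.inl α), h1 α⟩ : rootSpace H α.1)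
      (fun h => b.ne_zero (.inl α) (congrArg Subtype.val h))).1
      (finrank_rootSpace_eq_one α.1 (H.isNonZero_coe_root α)) ⟨x, hx⟩
    exact ⟨c, congrArg Subtype.val hc⟩
  refine ⟨fun i j => ?_, fun i γ => ?_, fun β => ?_, fun β γ hγ => ?_⟩
  · rw [h2, h2, ← LieSubalgebra.coe_bracket, trivial_lie_zero]; rfl
  · rw [h2]
    exact lie_eq_smul_of_mem_rootSpace (h1 γ) (hb i)
  · have hβ := H.isNonZero_coe_root β
    obtain ⟨h, e, f, ht, he, hf⟩ := exists_isSl2Triple_of_weight_isNonZero hβ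
    have hh := IsSl2Triple.h_eq_coroot hβ ht he hf
    obtain ⟨s, hs⟩ := hline β e he
    obtain ⟨t, hte⟩ := hline (negRoot β) f (by simpa [negRoot] using hf)
    have hef := ht.lie_e_f
    have hsum : ∑ i, (lieRootDatum hb).hv β i • b (.inr i) = h := by
      rw [hh]
      conv_rhs => rw [← hb.sum_repr (coroot β.1)]
      rw [← LieSubalgebra.coe_incl, map_sum]
      refine Finset.sum_congr rfl fun i _ => ?_
      rw [map_smul, h2]; rfl
    have hst : (s * t) • ⁅b (.inl β), b (.inl (negRoot β))⁆ = h := by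
      rw [← hef, ← hs, ← hte, smul_lie, lie_smul, smul_smul]
    have hst0 : s * t ≠ 0 := fun h0 => ht.h_ne_zero (by rw [← hst, h0, zero_smul])
    refine ⟨(s * t)⁻¹, inv_ne_zero hst0, ?_⟩
    rw [hsum, ← hst, smul_smul, inv_mul_cancel₀ hst0, one_smul]; rfl
  · have hmem := lie_mem_genWeightSpace_of_mem_genWeightSpace (h1 β) (h1 γ)
    by_cases hbot : rootSpace H ((β.1 : H → ℂ) + γ.1) = ⊥
    · refine ⟨0, ?_, rfl, rfl⟩
      have h0 : ⁅b (.inl β), b (.inl γ)⁆ ∈ (⊥ : LieSubmodule ℂ H L) := hbot ▸ hmem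
      rw [(LieSubmodule.mem_bot _).1 h0]; simp
    · -- the sum of the two roots is a nonzero weight `δ`
      let δw : Weight ℂ H L := ⟨(β.1 : H → ℂ) + γ.1, hbot⟩
      have hδw : (δw : H → ℂ) = (β.1 : H → ℂ) + γ.1 := rfl
      have hβ := H.isNonZero_coe_root β
      have hγ0 := H.isNonZero_coe_root γ
      have hδ0 : δw.IsNonZero := by
        intro h
        apply hγ
        refine Subtype.ext (DFunLike.coe_injective ?_)
        have h' : (β.1 : H → ℂ) + γ.1 = 0 := h
        exact (neg_eq_of_add_eq_zero_right h').symm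
      let δ : H.root := ⟨δw, by simpa using hδ0⟩
      obtain ⟨c, hc⟩ := hline δ _ hmem
      refine ⟨Pi.single δ c, ?_, ?_, ?_⟩
      · rw [Finset.sum_eq_single δ (fun ε _ h => by rw [Pi.single_eq_of_ne h, zero_smul]) (by simp),
          Pi.single_eq_same, hc]
      · refine Pi.single_eq_of_ne (fun h => ?_) _
        have h' : (β.1 : H → ℂ) = (β.1 : H → ℂ) + γ.1 :=
          congrArg (fun α : H.root => (α.1 : H → ℂ)) h
        exact hγ0 (left_eq_add.1 h')
      · -- `β + γ = -β` would make `2 • (-β)` a weight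
        refine Pi.single_eq_of_ne (fun h => ?_) _
        have h' : -(β.1 : H → ℂ) = (β.1 : H → ℂ) + γ.1 :=
          congrArg (fun α : H.root => (α.1 : H → ℂ)) h
        have h3 : (γ.1 : H → ℂ) = 2 • ((-β.1 : Weight ℂ H L) : H → ℂ) := by
          rw [Weight.coe_neg, two_nsmul, eq_sub_of_add_eq' h'.symm, sub_eq_add_neg]
        have h4 := rootSpace_two_smul (α := -β.1) (by simpa using hβ)
        rw [← h3] at h4
        exact γ.1.genWeightSpace_ne_bot' h4

lemma lieRootDatum_weyl_finite : Finite (weyl (lieRootDatum hb)) := by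
  refine weyl_finite _ (fun β γ => ?_) ?_
  · refine ⟨(rootSystem H).reflectionPerm β γ, ?_⟩
    have h1 := (rootSystem H).coroot_reflectionPerm β γ
    rw [RootPairing.coreflection_apply_coroot] at h1
    ext i
    have h2 := congrArg (fun h => hb.repr h i) h1
    change hb.repr (coroot γ.1) i - (∑ i, β.1 (hb i) * hb.repr (coroot γ.1) i) *
      hb.repr (coroot β.1) i = hb.repr (coroot _) i
    rw [root_expand]
    simp only [map_sub, map_smul, rootSystem_pairing_apply, rootSystem_coroot_apply] at h2
    exact h2.symm
  · have h1 := RootPairing.IsRootSystem.span_coroot_eq_top (P := rootSystem H)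
    have h2 := congrArg (Submodule.map hb.equivFun.toLinearMap) h1
    rw [Submodule.map_span, ← Set.range_comp, Submodule.map_top, LinearEquiv.range] at h2
    exact h2.ge

end LieData

end CenterUEA

/-- For a finite-dimensional semisimple Lie algebra over ℂ of rank `m` (the dimension of a
Cartan subalgebra), the center of the universal enveloping algebra `U(𝔤)` is isomorphic as a
ℂ-algebra to the polynomial algebra in `m` variables. -/
theorem center_universalEnveloping_iso_mvPolynomial
    (L : Type*) [LieRing L] [LieAlgebra ℂ L] [Module.Finite ℂ L]
    [LieAlgebra.IsSemisimple ℂ L]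
    (H : LieSubalgebra ℂ L) (hH : H.IsCartanSubalgebra)
    (m : ℕ) (hm : Module.finrank ℂ H = m) :
    Nonempty (Subalgebra.center ℂ (UniversalEnvelopingAlgebra ℂ L) ≃ₐ[ℂ]
      MvPolynomial (Fin m) ℂ) := by
  classical
  have := hH
  obtain ⟨b, h1, h2⟩ := CenterUEA.exists_root_basis (Module.finBasisOfFinrankEq ℂ H hm)
  refine (CenterUEA.isRootBasis _ h1 h2).center_equiv (fun x hx => ?_)
    (CenterUEA.lieRootDatum_weyl_finite _)
  have h0 : x ∈ LieAlgebra.center ℂ L := fun y => by rw [← lie_skew, hx, neg_zero]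
  rwa [LieAlgebra.center_eq_bot, LieSubmodule.mem_bot] at h0
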